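/- Fix an even integer r ≥ 4. There is a constant C = C(r) such that if G is drawn uniformly at random from the set of all simple r-regular graphs on vertex set {1,…,n} (with rn even), then with probability tending to 1 as n → ∞, for every rule A the E-process on G has vertex cover time at most C·n. -/

import Mathlib

open scoped ENNReal Classical

-- The edges traversed by a history `h = [Xₜ, Xₜ₋₁, …, X₀]` (most recent vertex first).
def trav {V : Type*} (h : List V) : List (Sym2 V) :=
  (h.zip h.tail).map fun p => s(p.1, p.2)

-- One-step transition probabilities of the E-process with edge-selection rule `A`.
noncomputable def eStep {V : Type*} [Fintype V] (G : SimpleGraph V) (A : List V → V) :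
    List V → V → ℝ
  | [], _ => 0
  | (v :: h), x =>
      if ∃ y : V, G.Adj v y ∧ s(v, y) ∉ trav (v :: h) then
        (if x = A (v :: h) then 1 else 0)
      else if G.Adj v x then 1 / ((G.neighborSet v).ncard : ℝ) else 0

-- A rule is valid if, whenever the current vertex has an untraversed incident edge, it
-- selects a neighbour along such an untraversed edge.
def ValidRule {V : Type*} (G : SimpleGraph V) (A : List V → V) : Prop :=
  ∀ (v : V) (h : List V), (∃ y : V, G.Adj v y ∧ s(v, y) ∉ trav (v :: h)) →
    G.Adj v (A (v :: h)) ∧ s(v, A (v :: h)) ∉ trav (v :: h)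

-- Probability that the E-process started at `u` produces the history `h`.
noncomputable def trajProb {V : Type*} [Fintype V] (G : SimpleGraph V) (A : List V → V)
    (u : V) : List V → ℝ
  | [] => 0
  | [x] => if x = u then 1 else 0
  | (x :: y :: h) => eStep G A (y :: h) x * trajProb G A u (y :: h)

-- Probability that the E-process started at `u` has not covered `V` by time `t`.
noncomputable def uncovProb {V : Type*} [Fintype V] (G : SimpleGraph V) (A : List V → V)
    (u : V) (t : ℕ) : ℝ :=
  ∑ f : Fin (t + 1) → V,
    if ∀ x : V, ∃ i, f i = x then 0 else trajProb G A u (List.ofFn f)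

-- Expected vertex cover time of the E-process started at `u`.
noncomputable def ecoverTime {V : Type*} [Fintype V] (G : SimpleGraph V) (A : List V → V)
    (u : V) : ℝ≥0∞ :=
  ∑' t : ℕ, ENNReal.ofReal (uncovProb G A u t)

/-!
All degrees being even, a maximal run along untraversed edges closes up at its starting vertex, so
the positions at which random steps are made form a simple random walk; the steps along untraversed
edges number at most `|E|`. As long as some vertex is unvisited, its component in the graph of the
edges untraversed at the start of the current run has only even degrees and is not a cycle, so it
is too large to be sparse, while the embedded random walk has missed all of it. In an expander a
set of `l + 1` vertices is missed for `c * n` steps with probability exponentially small in `l`,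
which for `l` of order `log n` beats the number `n * r ^ (2 * l)` of connected sets of that size.

The graph must therefore expand and have no small set of vertices spanning more edges than
vertices. For random regular graphs both follow from switchings, which compare the numbers of
regular graphs with given numbers of edges across a fixed cut.
-/

/-! ### Conductance and walks avoiding a set -/

section Conductance

variable {V : Type*} [Fintype V]

/-- The total weight that the kernel `P` sends from `U` to its complement. -/
noncomputable def cutWeight (P : Matrix V V ℝ) (U : Finset V) : ℝ :=
  ∑ x ∈ U, ∑ y ∈ Uᶜ, P x y

/-- The kernel `P` has conductance at least `φ`, with respect to the counting measure on `V`. -/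
def ConductanceAtLeast (P : Matrix V V ℝ) (φ : ℝ) : Prop :=
  ∀ U : Finset V, 2 * U.card ≤ Fintype.card V → φ * U.card ≤ cutWeight P U

/-- The Dirichlet form of `P`, summed over ordered pairs. -/
noncomputable def dirichletForm (P : Matrix V V ℝ) (f : V → ℝ) : ℝ :=
  ∑ x, ∑ y, P x y * (f x - f y) ^ 2

variable {P : Matrix V V ℝ} {φ : ℝ}

lemma dirichletForm_nonneg (hP : ∀ x y, 0 ≤ P x y) (f : V → ℝ) : 0 ≤ dirichletForm P f :=
  Finset.sum_nonneg fun x _ => Finset.sum_nonneg fun y _ => mul_nonneg (hP x y) (sq_nonneg _)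

lemma dirichletForm_sub_const (f : V → ℝ) (m : ℝ) :
    dirichletForm P (fun x => f x - m) = dirichletForm P f := by
  simp [dirichletForm]

lemma sum_mul_abs_indicator_sub (hsymm : P.IsSymm) (U : Finset V) :
    ∑ x, ∑ y, P x y * |(if x ∈ U then (1 : ℝ) else 0) - (if y ∈ U then 1 else 0)|
      = 2 * cutWeight P U := by
  have hsplit (x y : V) :
      P x y * |(if x ∈ U then (1 : ℝ) else 0) - (if y ∈ U then 1 else 0)|
        = (if x ∈ U then if y ∈ Uᶜ then P x y else 0 else 0)
          + (if y ∈ U then if x ∈ Uᶜ then P y x else 0 else 0) := by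
    by_cases hx : x ∈ U <;> by_cases hy : y ∈ U <;> simp [hx, hy, hsymm.apply]
  have hcut : ∑ x, ∑ y, (if x ∈ U then if y ∈ Uᶜ then P x y else 0 else 0) = cutWeight P U := by
    simp_rw [Finset.sum_ite_irrel, Finset.sum_const_zero, Finset.sum_ite_mem, Finset.univ_inter]
    rfl
  simp_rw [hsplit, Finset.sum_add_distrib]
  rw [Finset.sum_comm (f := fun x y => if y ∈ U then if x ∈ Uᶜ then P y x else 0 else 0), hcut]
  ring

lemma sum_mul_abs_sub_add_indicator (hsymm : P.IsSymm) {q : V → ℝ} (hq : ∀ x, 0 ≤ q x)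
    {U : Finset V} (hqU : ∀ x ∉ U, q x = 0) {μ : ℝ} (hμ : 0 ≤ μ) :
    ∑ x, ∑ y, P x y * |(q x + μ * if x ∈ U then 1 else 0) - (q y + μ * if y ∈ U then 1 else 0)|
      = ∑ x, ∑ y, P x y * |q x - q y| + μ * (2 * cutWeight P U) := by
  have hsplit (x y : V) :
      |(q x + μ * if x ∈ U then 1 else 0) - (q y + μ * if y ∈ U then 1 else 0)|
        = |q x - q y| + μ * |(if x ∈ U then (1 : ℝ) else 0) - (if y ∈ U then 1 else 0)| := by
    by_cases hx : x ∈ U <;> by_cases hy : y ∈ U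
    · simp [hx, hy]
    · simp [hx, hy, hqU y hy, abs_of_nonneg, hq x, add_nonneg, hμ]
    · rw [abs_sub_comm, abs_sub_comm (q x), abs_sub_comm (ite _ _ _)]
      simp [hx, hy, hqU x hx, abs_of_nonneg, hq y, add_nonneg, hμ]
    · simp [hx, hy]
  simp_rw [hsplit, mul_add, Finset.sum_add_distrib, mul_left_comm _ μ, ← Finset.mul_sum,
    sum_mul_abs_indicator_sub hsymm]

-- Subtracting the least positive value of `q` on its support peels off one level set at a time.
lemma conductance_mul_sum_le_sum_abs_sub (hsymm : P.IsSymm) (hφ : ConductanceAtLeast P φ)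
    {q : V → ℝ} (hq : ∀ x, 0 ≤ q x)
    (hsupp : 2 * (Finset.univ.filter fun x => 0 < q x).card ≤ Fintype.card V) :
    2 * φ * ∑ x, q x ≤ ∑ x, ∑ y, P x y * |q x - q y| := by
  induction hk : (Finset.univ.filter fun x => 0 < q x).card using Nat.strong_induction_on
    generalizing q with
  | _ k ih =>
  set U := Finset.univ.filter fun x => 0 < q x with hU
  have hzero : ∀ x ∉ U, q x = 0 := fun x hx =>
    le_antisymm (not_lt.1 fun hpos => hx (by simp [hU, hpos])) (hq x)
  rcases U.eq_empty_or_nonempty with hempty | hne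
  · have hq0 : ∀ x, q x = 0 := fun x => hzero x (by simp [hempty])
    simp [hq0]
  obtain ⟨x₀, hx₀, hmin⟩ := Finset.exists_min_image U q hne
  have hμ : 0 < q x₀ := (Finset.mem_filter.1 hx₀).2
  set q' : V → ℝ := fun x => q x - q x₀ * if x ∈ U then 1 else 0 with hq'
  have hqq' (x : V) : q x = q' x + q x₀ * if x ∈ U then 1 else 0 := by simp [hq']
  have hq'_nonneg (x : V) : 0 ≤ q' x := by
    by_cases hx : x ∈ U
    · simpa [hq', hx] using hmin x hx
    · simp [hq', hx, hq x]
  have hq'_zero : ∀ x ∉ U, q' x = 0 := fun x hx => by simp [hq', hx, hzero x hx]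
  have hsub : (Finset.univ.filter fun x => 0 < q' x) ⊆ U.erase x₀ := by
    intro x hx
    have hpos : 0 < q' x := (Finset.mem_filter.1 hx).2
    refine Finset.mem_erase.2 ⟨?_, by_contra fun hxU => hpos.ne' (hq'_zero x hxU)⟩
    rintro rfl
    simp [hq', hx₀] at hpos
  have hcard : (Finset.univ.filter fun x => 0 < q' x).card < U.card :=
    (Finset.card_le_card hsub).trans_lt (Finset.card_erase_lt_of_mem hx₀)
  have hrec := ih _ (hk ▸ hcard) hq'_nonneg (by omega) rfl
  have hsum : ∑ x, q x = ∑ x, q' x + q x₀ * U.card := by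
    simp [hq', mul_comm]
  have hgrad : ∑ x, ∑ y, P x y * |q x - q y|
      = ∑ x, ∑ y, P x y * |q' x - q' y| + q x₀ * (2 * cutWeight P U) := by
    rw [← sum_mul_abs_sub_add_indicator hsymm hq'_nonneg hq'_zero hμ.le]
    simp_rw [← hqq']
  rw [hsum, hgrad]
  nlinarith [mul_le_mul_of_nonneg_left (hφ U hsupp) hμ.le]

lemma sum_mul_add_sq_le (hsymm : P.IsSymm) (hP : P ∈ Matrix.rowStochastic ℝ V) (g : V → ℝ) :
    ∑ x, ∑ y, P x y * (g x + g y) ^ 2 ≤ 4 * ∑ x, g x ^ 2 := by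
  have hrow := Matrix.sum_row_of_mem_rowStochastic hP
  have hcol (y : V) : ∑ x, P x y = 1 := by simpa only [hsymm.apply] using hrow y
  calc ∑ x, ∑ y, P x y * (g x + g y) ^ 2
      ≤ ∑ x, ∑ y, (P x y * (2 * g x ^ 2) + P x y * (2 * g y ^ 2)) := by
        gcongr with x _ y _
        rw [← mul_add]
        exact mul_le_mul_of_nonneg_left (by nlinarith [sq_nonneg (g x - g y)])
          (Matrix.nonneg_of_mem_rowStochastic hP)
    _ = 4 * ∑ x, g x ^ 2 := by
        simp_rw [Finset.sum_add_distrib]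
        rw [Finset.sum_comm (f := fun x y => P x y * (2 * g y ^ 2))]
        simp_rw [← Finset.sum_mul, hrow, hcol, one_mul, ← Finset.mul_sum]
        ring

lemma cheeger_of_small_support (hsymm : P.IsSymm) (hP : P ∈ Matrix.rowStochastic ℝ V)
    (hφ0 : 0 ≤ φ) (hφ : ConductanceAtLeast P φ) {g : V → ℝ} (hg : ∀ x, 0 ≤ g x)
    (hsupp : 2 * (Finset.univ.filter fun x => 0 < g x).card ≤ Fintype.card V) :
    φ ^ 2 * ∑ x, g x ^ 2 ≤ dirichletForm P g := by
  have hP0 (x y : V) : 0 ≤ P x y := Matrix.nonneg_of_mem_rowStochastic hP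
  set T := ∑ x, g x ^ 2
  have hT : 0 ≤ T := Finset.sum_nonneg fun x _ => sq_nonneg _
  have hcoarea : 2 * φ * T ≤ ∑ x, ∑ y, P x y * |g x ^ 2 - g y ^ 2| := by
    refine conductance_mul_sum_le_sum_abs_sub hsymm hφ (fun x => sq_nonneg _) ?_
    simpa only [sq_pos_iff, (hg _).lt_iff_ne'] using hsupp
  have hcauchy : (∑ x, ∑ y, P x y * |g x ^ 2 - g y ^ 2|) ^ 2
      ≤ dirichletForm P g * ∑ x, ∑ y, P x y * (g x + g y) ^ 2 := by
    simp only [dirichletForm, ← Finset.sum_product']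
    refine Finset.sum_sq_le_sum_mul_sum_of_sq_le_mul _
      (fun p _ => mul_nonneg (hP0 _ _) (sq_nonneg _))
      (fun p _ => mul_nonneg (hP0 _ _) (sq_nonneg _)) fun p _ => ?_
    rw [mul_pow, sq_abs]
    exact le_of_eq (by ring)
  have hmain : (2 * φ * T) ^ 2 ≤ dirichletForm P g * (4 * T) :=
    calc (2 * φ * T) ^ 2 ≤ (∑ x, ∑ y, P x y * |g x ^ 2 - g y ^ 2|) ^ 2 := by gcongr
      _ ≤ dirichletForm P g * ∑ x, ∑ y, P x y * (g x + g y) ^ 2 := hcauchy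
      _ ≤ dirichletForm P g * (4 * T) := by
        gcongr
        exacts [dirichletForm_nonneg hP0 g, sum_mul_add_sq_le hsymm hP g]
  rcases hT.eq_or_lt with hT0 | hTpos
  · simpa [← hT0] using dirichletForm_nonneg hP0 g
  · nlinarith

lemma exists_median {α : Type*} [LinearOrder α] [Nonempty V] (f : V → α) :
    ∃ m : α, 2 * (Finset.univ.filter fun x => m < f x).card ≤ Fintype.card V ∧
      2 * (Finset.univ.filter fun x => f x < m).card ≤ Fintype.card V := by
  let fewAbove := Finset.univ.filter fun v =>
    2 * (Finset.univ.filter fun x => f v < f x).card ≤ Fintype.card V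
  have hne : fewAbove.Nonempty := by
    obtain ⟨v, -, hv⟩ := Finset.exists_max_image Finset.univ f Finset.univ_nonempty
    have hnone : (Finset.univ.filter fun x => f v < f x) = ∅ :=
      Finset.filter_eq_empty_iff.2 fun x hx => (hv x hx).not_gt
    exact ⟨v, by simp [fewAbove, hnone]⟩
  obtain ⟨v, hv, hmin⟩ := Finset.exists_min_image fewAbove f hne
  refine ⟨f v, (Finset.mem_filter.1 hv).2, ?_⟩
  by_contra! hmany
  have hbelow : (Finset.univ.filter fun x => f x < f v).Nonempty := Finset.card_pos.1 (by omega)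
  obtain ⟨w, hw, hwmax⟩ := Finset.exists_max_image _ f hbelow
  have hwv : f w < f v := (Finset.mem_filter.1 hw).2
  have hw_many : Fintype.card V < 2 * (Finset.univ.filter fun x => f w < f x).card := by
    by_contra! hfew
    exact (hmin w (Finset.mem_filter.2 ⟨Finset.mem_univ w, hfew⟩)).not_gt hwv
  have hdisj : Disjoint (Finset.univ.filter fun x => f x < f v)
      (Finset.univ.filter fun x => f w < f x) :=
    Finset.disjoint_left.2 fun x hx hx' => (hwmax x hx).not_gt (Finset.mem_filter.1 hx').2
  have hunion := Finset.card_le_univ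
    ((Finset.univ.filter fun x => f x < f v) ∪ Finset.univ.filter fun x => f w < f x)
  rw [Finset.card_union_of_disjoint hdisj] at hunion
  omega

lemma posPart_sq_add_negPart_sq (a : ℝ) : a⁺ ^ 2 + a⁻ ^ 2 = a ^ 2 := by
  rcases le_total a 0 with ha | ha <;> simp [ha]

lemma posPart_sub_sq_add_negPart_sub_sq_le (a b : ℝ) :
    (a⁺ - b⁺) ^ 2 + (a⁻ - b⁻) ^ 2 ≤ (a - b) ^ 2 := by
  have hab := mul_nonneg (posPart_nonneg a) (negPart_nonneg b)
  have hba := mul_nonneg (posPart_nonneg b) (negPart_nonneg a)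
  have ha := posPart_sub_negPart a
  have hb := posPart_sub_negPart b
  have hsum := posPart_sq_add_negPart_sq a
  have hsum' := posPart_sq_add_negPart_sq b
  have hprod : a * b = (a⁺ - a⁻) * (b⁺ - b⁻) := by rw [ha, hb]
  nlinarith

lemma dirichletForm_posPart_add_negPart_le (hP : ∀ x y, 0 ≤ P x y) (f : V → ℝ) :
    dirichletForm P f⁺ + dirichletForm P f⁻ ≤ dirichletForm P f := by
  simp only [dirichletForm, ← Finset.sum_add_distrib, ← mul_add, Pi.posPart_apply,
    Pi.negPart_apply]
  gcongr with x _ y _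
  · exact hP x y
  · exact posPart_sub_sq_add_negPart_sub_sq_le (f x) (f y)

lemma sum_sq_sub_sq_sum_div_card_le [Nonempty V] (f : V → ℝ) (m : ℝ) :
    ∑ x, f x ^ 2 - (∑ x, f x) ^ 2 / Fintype.card V ≤ ∑ x, (f x - m) ^ 2 := by
  have hexpand : ∑ x, (f x - m) ^ 2 = ∑ x, f x ^ 2 - 2 * m * ∑ x, f x + Fintype.card V * m ^ 2 := by
    simp_rw [sub_sq, Finset.sum_add_distrib, Finset.sum_sub_distrib]
    simp only [mul_right_comm, ← Finset.mul_sum, Finset.sum_const, Finset.card_univ, nsmul_eq_mul]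
  have hsq : 0 ≤ (∑ x, f x - m * Fintype.card V) ^ 2 / Fintype.card V := by positivity
  have hsq_eq : (∑ x, f x - m * Fintype.card V) ^ 2 / Fintype.card V
      = (∑ x, f x) ^ 2 / Fintype.card V - 2 * m * ∑ x, f x + Fintype.card V * m ^ 2 := by
    field_simp
    ring
  linarith

-- Cheeger's bound needs small support: split `f` at a median into its positive and negative parts.
lemma poincare_of_conductance [Nonempty V] (hsymm : P.IsSymm) (hP : P ∈ Matrix.rowStochastic ℝ V)
    (hφ0 : 0 ≤ φ) (hφ : ConductanceAtLeast P φ) (f : V → ℝ) :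
    φ ^ 2 * (∑ x, f x ^ 2 - (∑ x, f x) ^ 2 / Fintype.card V) ≤ dirichletForm P f := by
  obtain ⟨m, habove, hbelow⟩ := exists_median f
  set g : V → ℝ := fun x => f x - m with hg
  have hpos : φ ^ 2 * ∑ x, g⁺ x ^ 2 ≤ dirichletForm P g⁺ :=
    cheeger_of_small_support hsymm hP hφ0 hφ (fun x => posPart_nonneg _)
      (by simpa [hg] using habove)
  have hneg : φ ^ 2 * ∑ x, g⁻ x ^ 2 ≤ dirichletForm P g⁻ :=
    cheeger_of_small_support hsymm hP hφ0 hφ (fun x => negPart_nonneg _)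
      (by simpa [hg] using hbelow)
  have hsplit (x : V) : (f x - m) ^ 2 = g⁺ x ^ 2 + g⁻ x ^ 2 :=
    (posPart_sq_add_negPart_sq (g x)).symm
  calc φ ^ 2 * (∑ x, f x ^ 2 - (∑ x, f x) ^ 2 / Fintype.card V)
      ≤ φ ^ 2 * ∑ x, (f x - m) ^ 2 := by gcongr; exact sum_sq_sub_sq_sum_div_card_le f m
    _ = φ ^ 2 * ∑ x, g⁺ x ^ 2 + φ ^ 2 * ∑ x, g⁻ x ^ 2 := by
        simp_rw [hsplit, Finset.sum_add_distrib, mul_add]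
    _ ≤ dirichletForm P g⁺ + dirichletForm P g⁻ := add_le_add hpos hneg
    _ ≤ dirichletForm P g :=
        dirichletForm_posPart_add_negPart_le (fun _ _ => Matrix.nonneg_of_mem_rowStochastic hP) g
    _ = dirichletForm P f := dirichletForm_sub_const f m

open Matrix

lemma dirichletForm_eq (hsymm : P.IsSymm) (hP : P ∈ Matrix.rowStochastic ℝ V) (f : V → ℝ) :
    dirichletForm P f = 2 * ∑ x, f x ^ 2 - 2 * (f ⬝ᵥ P *ᵥ f) := by
  have hrow := Matrix.sum_row_of_mem_rowStochastic hP
  have hcol (y : V) : ∑ x, P x y = 1 := by simpa only [hsymm.apply] using hrow y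
  have hexpand (x y : V) : P x y * (f x - f y) ^ 2
      = P x y * f x ^ 2 + P x y * f y ^ 2 - 2 * (f x * (P x y * f y)) := by ring
  simp_rw [dirichletForm, hexpand, Finset.sum_sub_distrib, Finset.sum_add_distrib]
  rw [Finset.sum_comm (f := fun x y => P x y * f y ^ 2)]
  simp_rw [← Finset.sum_mul, hrow, hcol, one_mul, ← Finset.mul_sum, dotProduct, mulVec, dotProduct]
  ring

lemma sq_sum_le_of_vanishing (S : Finset V) {f : V → ℝ} (hf : ∀ x ∈ S, f x = 0) :
    (∑ x, f x) ^ 2 ≤ (Fintype.card V - S.card) * ∑ x, f x ^ 2 := by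
  have hsum : ∑ x ∈ Sᶜ, f x = ∑ x, f x :=
    Finset.sum_subset (Finset.subset_univ _) fun x _ hx => hf x (by simpa using hx)
  have hsum_sq : ∑ x ∈ Sᶜ, f x ^ 2 = ∑ x, f x ^ 2 :=
    Finset.sum_subset (Finset.subset_univ _) fun x _ hx => by simp [hf x (by simpa using hx)]
  have h := sq_sum_le_card_mul_sum_sq (s := Sᶜ) (f := f)
  rwa [hsum, hsum_sq, Finset.card_compl, Nat.cast_sub (Finset.card_le_univ S)] at h

/-- The bound on the norm of the kernel killed on `S`, as given by conductance `φ`. -/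
noncomputable def killingRate (φ : ℝ) (S : Finset V) : ℝ :=
  1 - φ ^ 2 / 2 * (S.card / Fintype.card V)

lemma dotProduct_mulVec_le_killingRate [Nonempty V] (hsymm : P.IsSymm)
    (hP : P ∈ Matrix.rowStochastic ℝ V) (hφ0 : 0 ≤ φ) (hφ : ConductanceAtLeast P φ) {S : Finset V}
    {f : V → ℝ} (hf : ∀ x ∈ S, f x = 0) :
    f ⬝ᵥ P *ᵥ f ≤ killingRate φ S * ∑ x, f x ^ 2 := by
  have hcard : (0 : ℝ) < Fintype.card V := by exact_mod_cast Fintype.card_pos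
  have hpoincare := poincare_of_conductance hsymm hP hφ0 hφ f
  rw [dirichletForm_eq hsymm hP] at hpoincare
  have hmean : (S.card / Fintype.card V : ℝ) * ∑ x, f x ^ 2
      ≤ ∑ x, f x ^ 2 - (∑ x, f x) ^ 2 / Fintype.card V := by
    have h := div_le_div_of_nonneg_right (sq_sum_le_of_vanishing S hf) hcard.le
    rw [sub_mul, sub_div, mul_div_cancel_left₀ _ hcard.ne'] at h
    rw [div_mul_eq_mul_div]
    linarith
  unfold killingRate
  nlinarith [mul_le_mul_of_nonneg_left hmean (sq_nonneg φ)]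

lemma neg_dotProduct_mulVec_le_killingRate [Nonempty V] (hsymm : P.IsSymm)
    (hP : P ∈ Matrix.rowStochastic ℝ V) (hφ0 : 0 ≤ φ) (hφ : ConductanceAtLeast P φ) {S : Finset V}
    {f : V → ℝ} (hf : ∀ x ∈ S, f x = 0) :
    -(f ⬝ᵥ P *ᵥ f) ≤ killingRate φ S * ∑ x, f x ^ 2 := by
  have habs := dotProduct_mulVec_le_killingRate hsymm hP hφ0 hφ (S := S) (f := fun x => |f x|)
    fun x hx => by simp [hf x hx]
  simp only [sq_abs] at habs
  refine le_trans ?_ habs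
  simp only [dotProduct, mulVec, ← Finset.sum_neg_distrib, Finset.mul_sum]
  gcongr with x _ y _
  calc -(f x * (P x y * f y)) ≤ |f x * (P x y * f y)| := neg_le_abs _
    _ = |f x| * (P x y * |f y|) := by
        rw [abs_mul, abs_mul, abs_of_nonneg (Matrix.nonneg_of_mem_rowStochastic hP)]

/-- One step of the walk with kernel `P`, killed on `S`. -/
noncomputable def killedStep (P : Matrix V V ℝ) (S : Finset V) (f : V → ℝ) (x : V) : ℝ :=
  if x ∈ S then 0 else (P *ᵥ f) x

/-- The probability that the walk with kernel `P` started at `x` is outside `S` at each of the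
times `0, …, k - 1`. -/
noncomputable def avoidProb (P : Matrix V V ℝ) (S : Finset V) : ℕ → V → ℝ
  | 0 => 1
  | k + 1 => killedStep P S (avoidProb P S k)

lemma avoidProb_nonneg (hP : ∀ x y, 0 ≤ P x y) (S : Finset V) (k : ℕ) (x : V) :
    0 ≤ avoidProb P S k x := by
  induction k generalizing x with
  | zero => simp [avoidProb]
  | succ k ih =>
    rw [avoidProb, killedStep]
    split_ifs
    · rfl
    · exact Finset.sum_nonneg fun y _ => mul_nonneg (hP x y) (ih y)

lemma avoidProb_one_le (hP : P ∈ Matrix.rowStochastic ℝ V) (S : Finset V) (x : V) :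
    avoidProb P S 1 x ≤ 1 := by
  have hone : (P *ᵥ 1) x = 1 := congrFun (Matrix.one_vecMul_of_mem_rowStochastic hP) x
  rw [avoidProb, killedStep, avoidProb, hone]
  split_ifs <;> norm_num

-- Polarization: apply the Rayleigh bounds to `f ± g`, where `g` is the killed step of `f`
-- divided by the rate.
lemma sum_sq_killedStep_le [Nonempty V] (hsymm : P.IsSymm) (hP : P ∈ Matrix.rowStochastic ℝ V)
    (hφ0 : 0 ≤ φ) (hφ : ConductanceAtLeast P φ) {S : Finset V} {f : V → ℝ}
    (hf : ∀ x ∈ S, f x = 0) (hrate : 0 < killingRate φ S) :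
    ∑ x, killedStep P S f x ^ 2 ≤ killingRate φ S ^ 2 * ∑ x, f x ^ 2 := by
  set l := killingRate φ S
  set g : V → ℝ := fun x => killedStep P S f x / l with hg
  have hgS : ∀ x ∈ S, g x = 0 := fun x hx => by simp [hg, killedStep, hx]
  have hplus := dotProduct_mulVec_le_killingRate hsymm hP hφ0 hφ (S := S) (f := f + g)
    fun x hx => by simp [hf x hx, hgS x hx]
  have hminus := neg_dotProduct_mulVec_le_killingRate hsymm hP hφ0 hφ (S := S) (f := f - g)
    fun x hx => by simp [hf x hx, hgS x hx]
  have hnorm : ∑ x, (f + g) x ^ 2 + ∑ x, (f - g) x ^ 2 = 2 * ∑ x, f x ^ 2 + 2 * ∑ x, g x ^ 2 := by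
    simp only [Finset.mul_sum, ← Finset.sum_add_distrib, Pi.add_apply, Pi.sub_apply]
    exact Finset.sum_congr rfl fun x _ => by ring
  have hcross : f ⬝ᵥ P *ᵥ g = g ⬝ᵥ P *ᵥ f := by
    rw [dotProduct_mulVec, ← mulVec_transpose, hsymm, dotProduct_comm]
  have hpolar : (f + g) ⬝ᵥ P *ᵥ (f + g) - (f - g) ⬝ᵥ P *ᵥ (f - g) = 4 * (g ⬝ᵥ P *ᵥ f) := by
    simp only [mulVec_add, mulVec_sub, add_dotProduct, sub_dotProduct, dotProduct_add,
      dotProduct_sub, hcross]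
    ring
  have hgf : g ⬝ᵥ P *ᵥ f = l * ∑ x, g x ^ 2 := by
    rw [dotProduct, Finset.mul_sum]
    refine Finset.sum_congr rfl fun x _ => ?_
    by_cases hx : x ∈ S
    · simp [hgS x hx]
    · simp only [hg, killedStep, hx, if_false]
      field_simp
  have hgle : ∑ x, g x ^ 2 ≤ ∑ x, f x ^ 2 := by nlinarith
  calc ∑ x, killedStep P S f x ^ 2 = l ^ 2 * ∑ x, g x ^ 2 := by
        simp only [hg, div_pow, ← Finset.sum_div]
        field_simp
    _ ≤ l ^ 2 * ∑ x, f x ^ 2 := by gcongr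

lemma sum_sq_avoidProb_le [Nonempty V] (hsymm : P.IsSymm) (hP : P ∈ Matrix.rowStochastic ℝ V)
    (hφ0 : 0 ≤ φ) (hφ : ConductanceAtLeast P φ) {S : Finset V} (hrate : 0 < killingRate φ S)
    (k : ℕ) :
    ∑ x, avoidProb P S (k + 1) x ^ 2 ≤ (killingRate φ S ^ k) ^ 2 * Fintype.card V := by
  induction k with
  | zero =>
    have hle (x : V) : avoidProb P S 1 x ^ 2 ≤ 1 :=
      pow_le_one₀ (avoidProb_nonneg (fun _ _ => Matrix.nonneg_of_mem_rowStochastic hP) S 1 x)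
        (avoidProb_one_le hP S x)
    simpa using Finset.sum_le_card_nsmul Finset.univ _ 1 fun x _ => hle x
  | succ k ih =>
    have hvanish : ∀ x ∈ S, avoidProb P S (k + 1) x = 0 := fun x hx => by
      simp [avoidProb, killedStep, hx]
    calc ∑ x, avoidProb P S (k + 2) x ^ 2
        ≤ killingRate φ S ^ 2 * ∑ x, avoidProb P S (k + 1) x ^ 2 :=
          sum_sq_killedStep_le hsymm hP hφ0 hφ hvanish hrate
      _ ≤ killingRate φ S ^ 2 * ((killingRate φ S ^ k) ^ 2 * Fintype.card V) := by gcongr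
      _ = (killingRate φ S ^ (k + 1)) ^ 2 * Fintype.card V := by ring

lemma avoidProb_succ_le (hsymm : P.IsSymm) (hP : P ∈ Matrix.rowStochastic ℝ V)
    (hφ0 : 0 ≤ φ) (hφ : ConductanceAtLeast P φ) {S : Finset V} (hrate : 0 < killingRate φ S)
    (k : ℕ) (u : V) :
    avoidProb P S (k + 1) u ≤ killingRate φ S ^ k * Fintype.card V := by
  have : Nonempty V := ⟨u⟩
  have hcard : (1 : ℝ) ≤ Fintype.card V := by exact_mod_cast Fintype.card_pos
  refine le_of_sq_le_sq ?_ (by positivity)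
  calc avoidProb P S (k + 1) u ^ 2 ≤ ∑ x, avoidProb P S (k + 1) x ^ 2 :=
        Finset.single_le_sum (f := fun x => avoidProb P S (k + 1) x ^ 2)
          (fun x _ => sq_nonneg _) (Finset.mem_univ u)
    _ ≤ (killingRate φ S ^ k) ^ 2 * Fintype.card V := sum_sq_avoidProb_le hsymm hP hφ0 hφ hrate k
    _ ≤ (killingRate φ S ^ k) ^ 2 * Fintype.card V ^ 2 := by gcongr; nlinarith
    _ = (killingRate φ S ^ k * Fintype.card V) ^ 2 := by ring

end Conductance

/-! ### Histories of the E-process -/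

section Histories

variable {V : Type*} {G : SimpleGraph V}

lemma trav_singleton (c : V) : trav [c] = [] := by simp [trav]

lemma trav_cons_cons (y v : V) (h : List V) : trav (y :: v :: h) = s(y, v) :: trav (v :: h) := by
  simp [trav]

lemma trav_subset_trav_cons (c : V) : ∀ h : List V, trav h ⊆ trav (c :: h)
  | [] => by simp [trav]
  | v :: h => by
    rw [trav_cons_cons]
    exact List.subset_cons_self _ _

lemma mem_of_mem_trav {x : V} {e : Sym2 V} (hx : x ∈ e) : ∀ {h : List V}, e ∈ trav h → x ∈ h
  | [], he => by simp [trav] at he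
  | [c], he => by simp [trav_singleton] at he
  | y :: v :: h, he => by
    rw [trav_cons_cons, List.mem_cons] at he
    rcases he with rfl | he
    · rcases Sym2.mem_iff.1 hx with rfl | rfl <;> simp
    · exact List.mem_cons_of_mem _ (mem_of_mem_trav hx he)

/-- The graph of the edges of `G` that the history `h` has not traversed (the "blue" edges). -/
def untraversed (G : SimpleGraph V) (h : List V) : SimpleGraph V :=
  G.deleteEdges {e | e ∈ trav h}

lemma untraversed_adj {h : List V} {x y : V} :
    (untraversed G h).Adj x y ↔ G.Adj x y ∧ s(x, y) ∉ trav h :=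
  SimpleGraph.deleteEdges_adj

lemma untraversed_singleton (c : V) : untraversed G [c] = G := by
  ext x y
  simp [untraversed_adj, trav_singleton]

lemma untraversed_cons_cons (y v : V) (h : List V) :
    untraversed G (y :: v :: h) = (untraversed G (v :: h)).deleteEdges {s(v, y)} := by
  ext a b
  simp only [untraversed_adj, trav_cons_cons, SimpleGraph.deleteEdges_adj, List.mem_cons,
    Set.mem_singleton_iff, Sym2.eq_swap (a := y)]
  tauto

lemma untraversed_cons_le (c : V) (h : List V) : untraversed G (c :: h) ≤ untraversed G h :=
  SimpleGraph.deleteEdges_anti fun _ he => trav_subset_trav_cons c h he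

/-- The E-process with history `v :: h` is stuck at `v` if all edges at `v` have been traversed, so
that its next step is a random one. -/
def Stuck (G : SimpleGraph V) (v : V) (h : List V) : Prop :=
  (untraversed G (v :: h)).IsIsolated v

lemma not_stuck_iff {v : V} {h : List V} :
    ¬ Stuck G v h ↔ ∃ y, G.Adj v y ∧ s(v, y) ∉ trav (v :: h) := by
  simp only [Stuck, SimpleGraph.IsIsolated, untraversed_adj, not_forall, not_not]

lemma Stuck.untraversed_cons {v : V} {h : List V} (hstuck : Stuck G v h) (y : V) :
    untraversed G (y :: v :: h) = untraversed G (v :: h) := by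
  rw [untraversed_cons_cons]
  exact SimpleGraph.deleteEdges_eq_self.2 (Set.disjoint_singleton_right.2 (hstuck y))

/-- The vertices at which the steps of a history out of the vertices in `h` were random, with
multiplicity. -/
noncomputable def departures (G : SimpleGraph V) : List V → List V
  | [] => []
  | v :: h => if Stuck G v h then v :: departures G h else departures G h

/-- The vertex at which the current blue phase of the history `c :: h` started: the vertex reached
by the last random step, or the start vertex if there was none. -/
noncomputable def phaseStart (G : SimpleGraph V) : V → List V → V
  | c, [] => c
  | c, v :: h => if Stuck G v h then c else phaseStart G v h

/-- The graph of the edges that were untraversed when the current blue phase started; here `h` is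
the history without its current vertex. -/
noncomputable def phaseGraph (G : SimpleGraph V) : List V → SimpleGraph V
  | [] => G
  | v :: h => if Stuck G v h then untraversed G (v :: h) else phaseGraph G h

lemma phaseGraph_le : ∀ h : List V, phaseGraph G h ≤ G
  | [] => le_rfl
  | v :: h => by
    rw [phaseGraph]
    split_ifs
    · exact SimpleGraph.deleteEdges_le _
    · exact phaseGraph_le h

lemma phaseGraph_adj_of_notMem {x y : V} (hxy : G.Adj x y) :
    ∀ {h : List V}, x ∉ h → (phaseGraph G h).Adj x y
  | [], _ => hxy
  | v :: h, hx => by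
    rw [phaseGraph]
    split_ifs
    · exact untraversed_adj.2 ⟨hxy, fun he => hx (mem_of_mem_trav (by simp) he)⟩
    · exact phaseGraph_adj_of_notMem hxy fun hmem => hx (List.mem_cons_of_mem _ hmem)

lemma untraversed_isIsolated_of_mem_departures {x : V} :
    ∀ {h : List V}, x ∈ departures G h → (untraversed G h).IsIsolated x
  | v :: h, hx => by
    rw [departures] at hx
    split_ifs at hx with hstuck
    · rcases List.mem_cons.1 hx with rfl | hx
      · exact hstuck
      · exact fun y hy =>
          untraversed_isIsolated_of_mem_departures hx y (untraversed_cons_le v h hy)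
    · exact fun y hy =>
        untraversed_isIsolated_of_mem_departures hx y (untraversed_cons_le v h hy)

lemma phaseGraph_isIsolated_of_mem_departures {x : V} :
    ∀ {h : List V}, x ∈ departures G h → (phaseGraph G h).IsIsolated x
  | v :: h, hx => by
    rw [phaseGraph]
    split_ifs with hstuck
    · exact untraversed_isIsolated_of_mem_departures hx
    · rw [departures, if_neg hstuck] at hx
      exact phaseGraph_isIsolated_of_mem_departures hx

/-- `IsHistory G c h` says that an E-process on `G` can produce the history `c :: h`: every step
is along an edge, and along an already traversed one only if the process is stuck. -/
inductive IsHistory (G : SimpleGraph V) : V → List V → Prop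
  | start (c : V) : IsHistory G c []
  | step {v y : V} {h : List V} (hist : IsHistory G v h) (adj : G.Adj v y)
      (stuck : s(v, y) ∈ trav (v :: h) → Stuck G v h) : IsHistory G y (v :: h)

lemma IsHistory.mem_edgeSet {c : V} {h : List V} (hist : IsHistory G c h) {e : Sym2 V}
    (he : e ∈ trav (c :: h)) : e ∈ G.edgeSet := by
  induction hist with
  | start c => simp [trav_singleton] at he
  | step _ adj _ ih =>
    rw [trav_cons_cons, List.mem_cons] at he
    rcases he with rfl | he
    · exact adj.symm
    · exact ih he

lemma IsHistory.length_le {c : V} {h : List V} (hist : IsHistory G c h) :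
    h.length ≤ (departures G h).length + (trav (c :: h)).toFinset.card := by
  induction hist with
  | start c => simp
  | @step v y h hist adj stuck ih =>
    rw [trav_cons_cons, List.toFinset_cons, departures, Sym2.eq_swap]
    by_cases hmem : s(v, y) ∈ trav (v :: h)
    · rw [if_pos (stuck hmem), Finset.insert_eq_of_mem (by simpa using hmem)]
      simp only [List.length_cons]
      omega
    · rw [if_neg (not_stuck_iff.2 ⟨y, adj, hmem⟩),
        Finset.card_insert_of_notMem (by simpa using hmem)]
      simp only [List.length_cons]
      omega

section Parity

variable [Fintype V]

lemma degree_deleteEdges_singleton {H : SimpleGraph V} {v y : V} (hvy : H.Adj v y) (x : V) :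
    (H.deleteEdges {s(v, y)}).degree x + (if x = v ∨ x = y then 1 else 0) = H.degree x := by
  have hinc : (H.deleteEdges {s(v, y)}).incidenceFinset x
      = (H.incidenceFinset x).erase s(v, y) := by
    ext e
    simp only [SimpleGraph.mem_incidenceFinset, SimpleGraph.incidenceSet,
      SimpleGraph.edgeSet_deleteEdges, Finset.mem_erase, Set.mem_sdiff, Set.mem_singleton_iff]
    exact ⟨fun ⟨⟨h₁, h₂⟩, h₃⟩ => ⟨h₂, h₁, h₃⟩, fun ⟨h₂, h₁, h₃⟩ => ⟨⟨h₁, h₂⟩, h₃⟩⟩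
  have hmem : s(v, y) ∈ H.incidenceFinset x ↔ x = v ∨ x = y := by
    simp [SimpleGraph.mem_incidenceFinset, SimpleGraph.incidenceSet, hvy]
  rw [← SimpleGraph.card_incidenceFinset_eq_degree, ← SimpleGraph.card_incidenceFinset_eq_degree,
    hinc]
  split_ifs with hx
  · exact Finset.card_erase_add_one (hmem.2 hx)
  · rw [Finset.erase_eq_of_notMem (mt hmem.1 hx), add_zero]

lemma Stuck.degree_eq_zero {v : V} {h : List V} (hstuck : Stuck G v h) :
    (untraversed G (v :: h)).degree v = 0 :=
  ((untraversed G (v :: h)).degree_eq_zero v).2 hstuck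

-- The blue phase is a trail from its start to the current vertex in a graph with even degrees.
lemma IsHistory.even_degree_untraversed_iff (heven : ∀ x, Even (G.degree x)) {c : V} {h : List V}
    (hist : IsHistory G c h) (x : V) :
    Even ((untraversed G (c :: h)).degree x) ↔ (x = c ↔ x = phaseStart G c h) := by
  induction hist generalizing x with
  | start c =>
    rw [untraversed_singleton]
    simp [phaseStart, heven x]
  | @step v y h _ adj stuck ih =>
    rw [phaseStart]
    split_ifs with hstuck
    · have hstart : v = phaseStart G v h := by
        simpa [hstuck.degree_eq_zero] using ih v
      rw [hstuck.untraversed_cons y]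
      simpa [← hstart] using ih x
    · have hadj : (untraversed G (v :: h)).Adj v y :=
        untraversed_adj.2 ⟨adj, fun he => hstuck (stuck he)⟩
      have hdeg := degree_deleteEdges_singleton hadj x
      have hparity := ih x
      have hne := adj.ne
      rw [untraversed_cons_cons]
      grind

lemma IsHistory.phaseStart_eq_of_stuck (heven : ∀ x, Even (G.degree x)) {c : V} {h : List V}
    (hist : IsHistory G c h) (hstuck : Stuck G c h) : phaseStart G c h = c := by
  simpa [hstuck.degree_eq_zero, eq_comm] using hist.even_degree_untraversed_iff heven c

lemma IsHistory.even_degree_phaseGraph (heven : ∀ x, Even (G.degree x)) {c : V} {h : List V}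
    (hist : IsHistory G c h) (x : V) : Even ((phaseGraph G h).degree x) := by
  induction hist with
  | start => exact heven x
  | @step v _ h hist _ _ ih =>
    by_cases hstuck : Stuck G v h
    · rw [phaseGraph, if_pos hstuck, hist.even_degree_untraversed_iff heven,
        hist.phaseStart_eq_of_stuck heven hstuck]
    · rwa [phaseGraph, if_neg hstuck]

end Parity

end Histories

/-! ### The random walk embedded in the E-process -/

section EmbeddedWalk

variable {V : Type*} [Fintype V] {G : SimpleGraph V} {A : List V → V}

/-- The transition matrix of the simple random walk on `G`. -/
noncomputable def srwKernel (G : SimpleGraph V) : Matrix V V ℝ :=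
  fun x y => if G.Adj x y then (G.degree x : ℝ)⁻¹ else 0

lemma srwKernel_nonneg (x y : V) : 0 ≤ srwKernel G x y := by
  rw [srwKernel]
  split_ifs <;> positivity

lemma sum_srwKernel_le_one (x : V) : ∑ y, srwKernel G x y ≤ 1 := by
  have hsum : ∑ y, srwKernel G x y = G.degree x * (G.degree x : ℝ)⁻¹ := by
    simp [srwKernel, ← Finset.sum_filter, ← SimpleGraph.neighborFinset_eq_filter]
  exact hsum.trans_le mul_inv_le_one

lemma ncard_neighborSet_eq_degree (x : V) : (G.neighborSet x).ncard = G.degree x := by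
  rw [← Nat.card_coe_set_eq, Nat.card_eq_fintype_card, G.card_neighborSet_eq_degree]

lemma eStep_of_stuck {c : V} {h : List V} (hstuck : Stuck G c h) (x : V) :
    eStep G A (c :: h) x = srwKernel G c x := by
  rw [eStep, if_neg (by rwa [← not_stuck_iff, not_not]), ncard_neighborSet_eq_degree, one_div]
  rfl

lemma eStep_of_not_stuck {c : V} {h : List V} (hstuck : ¬ Stuck G c h) (x : V) :
    eStep G A (c :: h) x = if x = A (c :: h) then 1 else 0 := by
  rw [eStep, if_pos (not_stuck_iff.1 hstuck)]

lemma eStep_nonneg (c : V) (h : List V) (x : V) : 0 ≤ eStep G A (c :: h) x := by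
  by_cases hstuck : Stuck G c h
  · exact (srwKernel_nonneg c x).trans_eq (eStep_of_stuck hstuck x).symm
  · rw [eStep_of_not_stuck hstuck]
    split_ifs <;> norm_num

lemma sum_eStep_le_one (c : V) (h : List V) : ∑ x, eStep G A (c :: h) x ≤ 1 := by
  by_cases hstuck : Stuck G c h
  · simpa only [eStep_of_stuck hstuck] using sum_srwKernel_le_one c
  · simp [eStep_of_not_stuck hstuck]

lemma trajProb_nonneg (u : V) : ∀ h : List V, 0 ≤ trajProb G A u h
  | [] => le_rfl
  | [x] => by
    rw [trajProb]
    split_ifs <;> norm_num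
  | x :: y :: h => mul_nonneg (eStep_nonneg y h x) (trajProb_nonneg u (y :: h))

lemma isHistory_of_trajProb_ne_zero (hA : ValidRule G A) (u : V) {c : V} {h : List V}
    (hne : trajProb G A u (c :: h) ≠ 0) : IsHistory G c h := by
  induction h generalizing c with
  | nil => exact .start c
  | cons v h ih =>
    have hstep : eStep G A (v :: h) c ≠ 0 := left_ne_zero_of_mul hne
    refine .step (ih (right_ne_zero_of_mul hne)) ?_ ?_ <;> by_cases hstuck : Stuck G v h
    · rw [eStep_of_stuck hstuck, srwKernel] at hstep
      exact (ite_ne_right_iff.1 hstep).1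
    · rw [eStep_of_not_stuck hstuck, ite_ne_right_iff] at hstep
      exact hstep.1 ▸ (hA v h (not_stuck_iff.1 hstuck)).1
    · exact fun _ => hstuck
    · rw [eStep_of_not_stuck hstuck, ite_ne_right_iff] at hstep
      exact fun hmem => absurd (hstep.1 ▸ hmem) (hA v h (not_stuck_iff.1 hstuck)).2

/-- The expectation of `F (X t) [X (t - 1), …, X 0]` for the E-process `X` started at `u`. -/
noncomputable def trajExp (G : SimpleGraph V) (A : List V → V) (u : V) (t : ℕ)
    (F : V → List V → ℝ) : ℝ :=
  ∑ f : Fin (t + 1) → V, trajProb G A u (List.ofFn f) * F (f 0) (List.ofFn (Fin.tail f))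

lemma uncovProb_eq_trajExp (u : V) (t : ℕ) :
    uncovProb G A u t = trajExp G A u t fun c h => if ∀ x, x ∈ c :: h then 0 else 1 := by
  refine Finset.sum_congr rfl fun f _ => ?_
  have hlist : f 0 :: List.ofFn (Fin.tail f) = List.ofFn f := List.ofFn_succ.symm
  simp only [hlist, List.mem_ofFn, mul_ite, mul_zero, mul_one]

lemma trajExp_zero (u : V) (F : V → List V → ℝ) : trajExp G A u 0 F = F u [] := by
  rw [trajExp, ← (Equiv.funUnique (Fin 1) V).symm.sum_comp]
  simp [trajProb]

lemma trajExp_succ (u : V) (t : ℕ) (F : V → List V → ℝ) :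
    trajExp G A u (t + 1) F
      = trajExp G A u t fun c h => ∑ x, eStep G A (c :: h) x * F x (c :: h) := by
  rw [trajExp, ← (Fin.consEquiv (fun _ : Fin (t + 2) => V)).sum_comp, Fintype.sum_prod_type_right]
  refine Finset.sum_congr rfl fun f _ => ?_
  rw [Finset.mul_sum]
  refine Finset.sum_congr rfl fun x _ => ?_
  have hlist : List.ofFn f = f 0 :: List.ofFn (Fin.tail f) := List.ofFn_succ
  have hcons : List.ofFn (Fin.consEquiv (fun _ : Fin (t + 2) => V) (x, f)) = x :: List.ofFn f :=
    List.ofFn_succ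
  change trajProb G A u (List.ofFn _) * F x (List.ofFn f) = _
  rw [hcons, hlist, trajProb]
  ring

lemma trajExp_finset_sum {ι : Type*} (u : V) (t : ℕ) (s : Finset ι) (F : ι → V → List V → ℝ) :
    trajExp G A u t (fun c h => ∑ i ∈ s, F i c h) = ∑ i ∈ s, trajExp G A u t (F i) := by
  simp only [trajExp, Finset.mul_sum]
  exact Finset.sum_comm

lemma trajExp_mono (hA : ValidRule G A) (u : V) {t : ℕ} {F F' : V → List V → ℝ}
    (hF : ∀ c h, IsHistory G c h → h.length = t → F c h ≤ F' c h) :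
    trajExp G A u t F ≤ trajExp G A u t F' := by
  refine Finset.sum_le_sum fun f _ => ?_
  by_cases hzero : trajProb G A u (List.ofFn f) = 0
  · rw [hzero, zero_mul, zero_mul]
  · refine mul_le_mul_of_nonneg_left (hF _ _ ?_ (List.length_ofFn ..)) (trajProb_nonneg _ _)
    rw [List.ofFn_succ] at hzero
    exact isHistory_of_trajProb_ne_zero hA u hzero

lemma trajExp_le_of_supermartingale (hA : ValidRule G A) (u : V) {F : V → List V → ℝ}
    (hF : ∀ c h, IsHistory G c h → ∑ x, eStep G A (c :: h) x * F x (c :: h) ≤ F c h) (t : ℕ) :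
    trajExp G A u t F ≤ F u [] := by
  induction t with
  | zero => exact (trajExp_zero u F).le
  | succ t ih =>
    rw [trajExp_succ]
    exact (trajExp_mono hA u fun c h hist _ => hF c h hist).trans ih

lemma uncovProb_le_one (hA : ValidRule G A) (u : V) (t : ℕ) : uncovProb G A u t ≤ 1 := by
  rw [uncovProb_eq_trajExp]
  calc trajExp G A u t (fun c h => if ∀ x, x ∈ c :: h then 0 else 1)
      ≤ trajExp G A u t (fun _ _ => 1) :=
        trajExp_mono hA u fun _ _ _ _ => by split_ifs <;> norm_num
    _ ≤ 1 := trajExp_le_of_supermartingale hA u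
        (fun c h _ => by simpa using sum_eStep_le_one c h) t

/-- The conditional probability, given the history `c :: h`, that the first `k` random steps all
depart from vertices outside `S`, computed as if the departures formed a simple random walk (and
with a truncated subtraction: all departures in `h` must avoid `S` even if there are more than
`k` of them). -/
noncomputable def avoidPotential (G : SimpleGraph V) (S : Finset V) (k : ℕ) (c : V) (h : List V) :
    ℝ :=
  if ∀ x ∈ departures G h, x ∉ S then
    avoidProb (srwKernel G) S (k - (departures G h).length) (phaseStart G c h)
  else 0

lemma avoidPotential_nonneg (S : Finset V) (k : ℕ) (c : V) (h : List V) :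
    0 ≤ avoidPotential G S k c h := by
  rw [avoidPotential]
  split_ifs
  · exact avoidProb_nonneg srwKernel_nonneg _ _ _
  · rfl

lemma avoidPotential_cons_of_not_stuck {c : V} {h : List V} (hstuck : ¬ Stuck G c h)
    (S : Finset V) (k : ℕ) (x : V) :
    avoidPotential G S k x (c :: h) = avoidPotential G S k c h := by
  simp [avoidPotential, departures, phaseStart, hstuck]

lemma sum_srwKernel_mul_avoidProb_le {S : Finset V} {c : V} (hc : c ∉ S) (k : ℕ) :
    ∑ x, srwKernel G c x * avoidProb (srwKernel G) S (k - 1) x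
      ≤ avoidProb (srwKernel G) S k c := by
  cases k with
  | zero => simpa [avoidProb] using sum_srwKernel_le_one c
  | succ k =>
    rw [Nat.add_sub_cancel, avoidProb, killedStep, if_neg hc]
    rfl

-- Parity forces each blue phase to close up at its start, so the vertices reached by random steps
-- perform a simple random walk.
lemma sum_eStep_mul_avoidPotential_le (heven : ∀ x, Even (G.degree x)) (S : Finset V) (k : ℕ)
    {c : V} {h : List V} (hist : IsHistory G c h) :
    ∑ x, eStep G A (c :: h) x * avoidPotential G S k x (c :: h) ≤ avoidPotential G S k c h := by
  by_cases hstuck : Stuck G c h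
  · have hnext (x : V) : avoidPotential G S k x (c :: h)
        = if ∀ y ∈ c :: departures G h, y ∉ S then
            avoidProb (srwKernel G) S (k - (departures G h).length - 1) x else 0 := by
      simp [avoidPotential, departures, phaseStart, hstuck, Nat.sub_sub]
    simp only [hnext, eStep_of_stuck hstuck]
    split_ifs with havoid
    · rw [List.forall_mem_cons] at havoid
      rw [avoidPotential, if_pos havoid.2, hist.phaseStart_eq_of_stuck heven hstuck]
      exact sum_srwKernel_mul_avoidProb_le havoid.1 _
    · simpa using avoidPotential_nonneg S k c h
  · simp [avoidPotential_cons_of_not_stuck hstuck, eStep_of_not_stuck hstuck]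

lemma trajExp_avoidPotential_le (heven : ∀ x, Even (G.degree x)) (hA : ValidRule G A)
    (S : Finset V) (k : ℕ) (u : V) (t : ℕ) :
    trajExp G A u t (avoidPotential G S k) ≤ avoidProb (srwKernel G) S k u := by
  have hbound := trajExp_le_of_supermartingale hA u
    (fun c h hist => sum_eStep_mul_avoidPotential_le heven S k hist) t
  simpa [avoidPotential, departures, phaseStart] using hbound

end EmbeddedWalk

/-! ### Covering sparse expanders -/

section Covering

variable {V : Type*} {G B : SimpleGraph V}

lemma exists_walk_detour {v w a b : V} (p : B.Walk v w) (ha : a ∈ p.support) (hab : B.Adj a b) :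
    ∃ q : B.Walk v w, q.length = p.length + 2 ∧
      q.support.toFinset = insert b p.support.toFinset := by
  have hlength := congrArg SimpleGraph.Walk.length (p.take_spec ha)
  rw [SimpleGraph.Walk.length_append] at hlength
  refine ⟨(p.takeUntil a ha).append (.cons hab (.cons hab.symm (p.dropUntil a ha))), ?_, ?_⟩
  · simp only [SimpleGraph.Walk.length_append, SimpleGraph.Walk.length_cons]
    omega
  · ext z
    have hsupport : z ∈ p.support ↔
        z ∈ (p.takeUntil a ha).support ∨ z ∈ (p.dropUntil a ha).support := by
      rw [← SimpleGraph.Walk.mem_support_append_iff, p.take_spec ha]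
    simp only [List.mem_toFinset, SimpleGraph.Walk.mem_support_append_iff,
      SimpleGraph.Walk.support_cons, List.mem_cons, Finset.mem_insert, hsupport]
    grind [(p.dropUntil a ha).start_mem_support]

lemma not_isIsolated_of_reachable {v x : V} (hv : ¬ B.IsIsolated v) (hx : B.Reachable v x) :
    ¬ B.IsIsolated x := by
  obtain ⟨p⟩ := hx.symm
  cases p with
  | nil => exact hv
  | cons hadj _ => exact fun hiso => hiso _ hadj

lemma card_interedges_eq_sum (U W : Finset V) :
    (G.interedges U W).card = ∑ x ∈ U, (W.filter fun y => G.Adj x y).card := by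
  simp only [SimpleGraph.interedges_def, Finset.card_filter, Finset.sum_product]

variable [Fintype V]

lemma exists_closed_walk_card_support {v : V} {k : ℕ}
    (hk : k < (Finset.univ.filter fun x => B.Reachable v x).card) :
    ∃ p : B.Walk v v, p.length = 2 * k ∧ p.support.toFinset.card = k + 1 := by
  induction k with
  | zero => exact ⟨.nil, by simp, by simp⟩
  | succ k ih =>
    obtain ⟨p, hlength, hcard⟩ := ih (by omega)
    obtain ⟨x, hx, hxp⟩ := Finset.exists_mem_notMem_of_card_lt_card (hcard.trans_lt hk)
    obtain ⟨q⟩ := (Finset.mem_filter.1 hx).2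
    obtain ⟨d, -, hfst, hsnd⟩ := q.exists_boundary_dart {x | x ∈ p.support} (by simp)
      (by simpa using hxp)
    obtain ⟨p', hlength', hsupport'⟩ := exists_walk_detour p hfst d.adj
    refine ⟨p', by omega, ?_⟩
    rw [hsupport', Finset.card_insert_of_notMem (by simpa using hsnd), hcard]

/-- Every set of at most `l` vertices spans at most as many edges as it has vertices;
`interedges U U` counts each edge twice. -/
def LocallySparse (G : SimpleGraph V) (l : ℕ) : Prop :=
  ∀ U : Finset V, U.card ≤ l → (G.interedges U U).card ≤ 2 * U.card

lemma sum_degree_le_card_interedges (hle : B ≤ G) {K : Finset V}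
    (hK : ∀ x ∈ K, ∀ y, B.Adj x y → y ∈ K) :
    ∑ x ∈ K, B.degree x ≤ (G.interedges K K).card := by
  rw [card_interedges_eq_sum]
  refine Finset.sum_le_sum fun x hx => Finset.card_le_card fun y hy => ?_
  rw [SimpleGraph.mem_neighborFinset] at hy
  exact Finset.mem_filter.2 ⟨hK x hx y hy, hle hy⟩

lemma two_le_degree_of_reachable (heven : ∀ x, Even (B.degree x)) {v x : V}
    (hv : ¬ B.IsIsolated v) (hx : B.Reachable v x) : 2 ≤ B.degree x := by
  have hpos := (B.degree_pos x).2 (not_isIsolated_of_reachable hv hx)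
  have := heven x
  grind

lemma lt_card_reachable_of_locallySparse {l : ℕ} (hsparse : LocallySparse G l) (hle : B ≤ G)
    (heven : ∀ x, Even (B.degree x)) {v : V} (hv : 4 ≤ B.degree v) :
    l < (Finset.univ.filter fun x => B.Reachable v x).card := by
  set K := Finset.univ.filter fun x => B.Reachable v x with hK
  have hvK : v ∈ K := by simp [hK]
  by_contra! hcard
  have hupper : ∑ x ∈ K, B.degree x ≤ 2 * K.card := by
    refine (sum_degree_le_card_interedges hle fun x hx y hxy => ?_).trans (hsparse K hcard)
    exact Finset.mem_filter.2 ⟨Finset.mem_univ y, (Finset.mem_filter.1 hx).2.trans hxy.reachable⟩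
  have hlower : ∑ x ∈ K, (2 + if x = v then 2 else 0) ≤ ∑ x ∈ K, B.degree x := by
    refine Finset.sum_le_sum fun x hx => ?_
    split_ifs with hxv
    · exact hxv ▸ hv
    · exact two_le_degree_of_reachable heven ((B.degree_pos v).1 (by omega))
        (Finset.mem_filter.1 hx).2
  rw [Finset.sum_add_distrib, Finset.sum_ite_eq' K v, if_pos hvK, Finset.sum_const,
    smul_eq_mul] at hlower
  omega

/-- The sets of `l + 1` vertices that are traced out by closed walks of length `2 * l`. -/
noncomputable def closedWalkSupports (G : SimpleGraph V) (l : ℕ) : Finset (Finset V) :=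
  (Finset.univ.biUnion fun v =>
    (G.finsetWalkLength (2 * l) v v).image fun p => p.support.toFinset).filter
      fun S => S.card = l + 1

lemma card_finsetWalkLength_le {r : ℕ} (hdeg : ∀ x, G.degree x ≤ r) (k : ℕ) (u v : V) :
    (G.finsetWalkLength k u v).card ≤ r ^ k := by
  induction k generalizing u with
  | zero =>
    rw [SimpleGraph.finsetWalkLength]
    split_ifs with huv
    · subst huv
      simp
    · simp
  | succ k ih =>
    rw [SimpleGraph.finsetWalkLength]
    calc _ ≤ ∑ _ : G.neighborSet u, _ := Finset.card_biUnion_le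
      _ ≤ ∑ _ : G.neighborSet u, r ^ k := Finset.sum_le_sum fun w _ => by
          simpa using ih w.1
      _ = G.degree u * r ^ k := by
          rw [Finset.sum_const, Finset.card_univ, SimpleGraph.card_neighborSet_eq_degree,
            smul_eq_mul]
      _ ≤ r ^ (k + 1) := by
          rw [pow_succ']
          exact Nat.mul_le_mul_right _ (hdeg u)

lemma card_closedWalkSupports_le {r : ℕ} (hdeg : ∀ x, G.degree x ≤ r) (l : ℕ) :
    (closedWalkSupports G l).card ≤ Fintype.card V * r ^ (2 * l) :=
  calc (closedWalkSupports G l).card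
      ≤ ∑ v, ((G.finsetWalkLength (2 * l) v v).image fun p => p.support.toFinset).card :=
        (Finset.card_filter_le _ _).trans Finset.card_biUnion_le
    _ ≤ ∑ _v : V, r ^ (2 * l) := Finset.sum_le_sum fun v _ =>
        Finset.card_image_le.trans (card_finsetWalkLength_le hdeg _ v v)
    _ = Fintype.card V * r ^ (2 * l) := by simp

-- The component of an unvisited vertex in the phase graph has only even degrees and is not a
-- cycle, so it is too large to be sparse, while random steps only depart from isolated vertices.
lemma IsHistory.exists_mem_closedWalkSupports {l : ℕ} (heven : ∀ x, Even (G.degree x))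
    (hdeg : ∀ x, 4 ≤ G.degree x) (hsparse : LocallySparse G l) {c : V} {h : List V}
    (hist : IsHistory G c h) {v : V} (hv : v ∉ h) :
    ∃ S ∈ closedWalkSupports G l, ∀ x ∈ departures G h, x ∉ S := by
  have hfull : 4 ≤ (phaseGraph G h).degree v := by
    refine (hdeg v).trans (Finset.card_le_card fun y hy => ?_)
    rw [SimpleGraph.mem_neighborFinset] at hy ⊢
    exact phaseGraph_adj_of_notMem hy hv
  obtain ⟨p, hlength, hcard⟩ := exists_closed_walk_card_support
    (lt_card_reachable_of_locallySparse hsparse (phaseGraph_le h)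
      (hist.even_degree_phaseGraph heven) hfull)
  refine ⟨p.support.toFinset, ?_, fun x hx hxp => ?_⟩
  · refine Finset.mem_filter.2 ⟨Finset.mem_biUnion.2 ⟨v, Finset.mem_univ v, ?_⟩, hcard⟩
    refine Finset.mem_image.2 ⟨p.mapLe (phaseGraph_le h), ?_, ?_⟩
    · rw [SimpleGraph.mem_finsetWalkLength_iff, SimpleGraph.Walk.length_map, hlength]
    · simp
  · have hreach : (phaseGraph G h).Reachable v x := ⟨p.takeUntil x (List.mem_toFinset.1 hxp)⟩
    exact not_isIsolated_of_reachable (((phaseGraph G h).degree_pos v).1 (by omega)) hreach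
      (phaseGraph_isIsolated_of_mem_departures hx)

lemma IsHistory.exists_avoidPotential_eq_one {l k : ℕ} (heven : ∀ x, Even (G.degree x))
    (hdeg : ∀ x, 4 ≤ G.degree x) (hsparse : LocallySparse G l) {c : V} {h : List V}
    (hist : IsHistory G c h) (hlength : k + G.edgeFinset.card ≤ h.length) {v : V} (hv : v ∉ h) :
    ∃ S ∈ closedWalkSupports G l, avoidPotential G S k c h = 1 := by
  obtain ⟨S, hS, havoid⟩ := hist.exists_mem_closedWalkSupports heven hdeg hsparse hv
  have hedges : (trav (c :: h)).toFinset.card ≤ G.edgeFinset.card :=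
    Finset.card_le_card fun e he =>
      SimpleGraph.mem_edgeFinset.2 (hist.mem_edgeSet (List.mem_toFinset.1 he))
  have hdepart := hist.length_le
  refine ⟨S, hS, ?_⟩
  rw [avoidPotential, if_pos havoid, show k - (departures G h).length = 0 by omega]
  rfl

lemma uncovProb_le_sum_avoidProb {A : List V → V} (hA : ValidRule G A) {l k t : ℕ}
    (heven : ∀ x, Even (G.degree x)) (hdeg : ∀ x, 4 ≤ G.degree x) (hsparse : LocallySparse G l)
    (ht : k + G.edgeFinset.card ≤ t) (u : V) :
    uncovProb G A u t ≤ ∑ S ∈ closedWalkSupports G l, avoidProb (srwKernel G) S k u := by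
  rw [uncovProb_eq_trajExp]
  calc trajExp G A u t (fun c h => if ∀ x, x ∈ c :: h then 0 else 1)
      ≤ trajExp G A u t fun c h => ∑ S ∈ closedWalkSupports G l, avoidPotential G S k c h := by
        refine trajExp_mono hA u fun c h hist hlength => ?_
        split_ifs with hcov
        · exact Finset.sum_nonneg fun S _ => avoidPotential_nonneg S k c h
        · obtain ⟨v, hv⟩ := not_forall.1 hcov
          obtain ⟨S, hS, hone⟩ := hist.exists_avoidPotential_eq_one (k := k) heven hdeg hsparse
            (by omega) fun hmem => hv (List.mem_cons_of_mem c hmem)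
          exact hone.symm.trans_le (Finset.single_le_sum
            (fun S _ => avoidPotential_nonneg S k c h) hS)
    _ = ∑ S ∈ closedWalkSupports G l, trajExp G A u t (avoidPotential G S k) :=
        trajExp_finset_sum u t _ _
    _ ≤ ∑ S ∈ closedWalkSupports G l, avoidProb (srwKernel G) S k u :=
        Finset.sum_le_sum fun S _ => trajExp_avoidPotential_le heven hA S k u t

/-- Every set of at most half of the vertices has edge boundary at least `h` times its size. -/
def EdgeExpansionAtLeast (G : SimpleGraph V) (h : ℝ) : Prop :=
  ∀ U : Finset V, 2 * U.card ≤ Fintype.card V → h * U.card ≤ (G.interedges U Uᶜ).card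

variable {r : ℕ}

lemma srwKernel_isSymm (hreg : G.IsRegularOfDegree r) : (srwKernel G).IsSymm :=
  Matrix.IsSymm.ext fun x y => by simp only [srwKernel, hreg.degree_eq, G.adj_comm]

lemma srwKernel_mem_rowStochastic (hdeg : ∀ x, 0 < G.degree x) :
    srwKernel G ∈ Matrix.rowStochastic ℝ V := by
  rw [Matrix.mem_rowStochastic_iff_sum]
  refine ⟨srwKernel_nonneg, fun x => ?_⟩
  have hne : (G.degree x : ℝ) ≠ 0 := by exact_mod_cast (hdeg x).ne'
  simp [srwKernel, ← Finset.sum_filter, ← SimpleGraph.neighborFinset_eq_filter, hne]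

lemma conductanceAtLeast_srwKernel (hreg : G.IsRegularOfDegree r) {h : ℝ}
    (hexp : EdgeExpansionAtLeast G h) : ConductanceAtLeast (srwKernel G) (h / r) := by
  intro U hU
  have hcut : cutWeight (srwKernel G) U = (G.interedges U Uᶜ).card / r := by
    rw [card_interedges_eq_sum]
    push_cast
    rw [Finset.sum_div]
    refine Finset.sum_congr rfl fun x _ => ?_
    simp [srwKernel, hreg.degree_eq, ← Finset.sum_filter, div_eq_mul_inv]
  rw [hcut, div_mul_eq_mul_div]
  exact div_le_div_of_nonneg_right (hexp U hU) r.cast_nonneg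

lemma uncovProb_le_of_expansion {A : List V → V} (hA : ValidRule G A) (hr : 4 ≤ r)
    (hr_even : Even r) (hreg : G.IsRegularOfDegree r) {h : ℝ} (hh : 0 ≤ h)
    (hexp : EdgeExpansionAtLeast G h) {l k t : ℕ} (hsparse : LocallySparse G l) {q : ℝ}
    (hq : q = 1 - (h / r) ^ 2 / 2 * ((l + 1) / Fintype.card V)) (hq0 : 0 < q)
    (ht : k + 1 + r * Fintype.card V ≤ t) (u : V) :
    uncovProb G A u t ≤ (Fintype.card V * r ^ (2 * l)) * (q ^ k * Fintype.card V) := by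
  have hedges : G.edgeFinset.card ≤ r * Fintype.card V := by
    have hsum := G.sum_degrees_eq_twice_card_edges
    simp only [hreg.degree_eq, Finset.sum_const, Finset.card_univ, smul_eq_mul] at hsum
    rw [mul_comm r]
    omega
  have hterm : ∀ S ∈ closedWalkSupports G l,
      avoidProb (srwKernel G) S (k + 1) u ≤ q ^ k * Fintype.card V := fun S hS => by
    have hrate : killingRate (h / r) S = q := by
      rw [hq, killingRate, (Finset.mem_filter.1 hS).2]
      push_cast
      rfl
    have hbound := avoidProb_succ_le (srwKernel_isSymm hreg)
      (srwKernel_mem_rowStochastic fun x => by rw [hreg.degree_eq]; omega) (by positivity)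
      (conductanceAtLeast_srwKernel hreg hexp) (hrate ▸ hq0) k u
    rwa [hrate] at hbound
  calc uncovProb G A u t
      ≤ ∑ S ∈ closedWalkSupports G l, avoidProb (srwKernel G) S (k + 1) u :=
        uncovProb_le_sum_avoidProb hA (fun x => by rwa [hreg.degree_eq])
          (fun x => by rwa [hreg.degree_eq]) hsparse (by omega) u
    _ ≤ (closedWalkSupports G l).card * (q ^ k * Fintype.card V) := by
        simpa using Finset.sum_le_card_nsmul _ _ _ hterm
    _ ≤ (Fintype.card V * r ^ (2 * l)) * (q ^ k * Fintype.card V) := by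
        gcongr
        exact_mod_cast card_closedWalkSupports_le (fun x => (hreg.degree_eq x).le) l

end Covering

section CoverTime

lemma tsum_ofReal_le_of_eventually_geometric {f : ℕ → ℝ} {T : ℕ} {q : ℝ} (hq0 : 0 ≤ q)
    (hq1 : q < 1) (hle_one : ∀ t, f t ≤ 1) (hgeom : ∀ t, f (t + T) ≤ q ^ t) :
    ∑' t, ENNReal.ofReal (f t) ≤ ENNReal.ofReal (T + (1 - q)⁻¹) := by
  have hhead : ∑ t ∈ Finset.range T, ENNReal.ofReal (f t) ≤ ENNReal.ofReal T := by
    simpa using Finset.sum_le_card_nsmul (Finset.range T) _ 1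
      fun t _ => ENNReal.ofReal_le_one.2 (hle_one t)
  have htail : ∑' t, ENNReal.ofReal (f (t + T)) ≤ ENNReal.ofReal (1 - q)⁻¹ :=
    calc ∑' t, ENNReal.ofReal (f (t + T)) ≤ ∑' t : ℕ, ENNReal.ofReal (q ^ t) :=
          ENNReal.tsum_le_tsum fun t => ENNReal.ofReal_le_ofReal (hgeom t)
      _ = ENNReal.ofReal (1 - q)⁻¹ := by
          rw [← ENNReal.ofReal_tsum_of_nonneg (fun t => pow_nonneg hq0 t)
            (summable_geometric_of_lt_one hq0 hq1), tsum_geometric_of_lt_one hq0 hq1]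
  rw [← ENNReal.summable.sum_add_tsum_nat_add' (k := T),
    ENNReal.ofReal_add T.cast_nonneg (inv_nonneg.2 (sub_nonneg.2 hq1.le))]
  exact add_le_add hhead htail

lemma one_sub_mul_div_pow_le_exp_pow {g : ℝ} {c m n : ℕ} (hn : n ≠ 0)
    (hnonneg : 0 ≤ 1 - g * (m / n)) :
    (1 - g * (m / n)) ^ (c * n) ≤ Real.exp (-(g * c)) ^ m :=
  calc (1 - g * (m / n)) ^ (c * n) ≤ Real.exp (-(g * (m / n))) ^ (c * n) :=
        pow_le_pow_left₀ hnonneg (Real.one_sub_le_exp_neg _) _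
    _ = Real.exp (-(g * c)) ^ m := by
        rw [← Real.exp_nat_mul, ← Real.exp_nat_mul]
        congr 1
        push_cast
        field_simp

lemma exists_nat_mul_exp_neg_le_one {a g : ℝ} (ha : 0 < a) (hg : 0 < g) :
    ∃ c : ℕ, a * Real.exp (-(g * c)) ≤ 1 := by
  obtain ⟨c, hc⟩ := exists_nat_ge (Real.log a / g)
  refine ⟨c, ?_⟩
  rw [Real.exp_neg, ← div_eq_mul_inv, div_le_one (Real.exp_pos _),
    ← Real.log_le_iff_le_exp ha]
  rwa [div_le_iff₀' hg] at hc

lemma mul_pow_mul_one_sub_pow_le_one {g : ℝ} {r b c l n : ℕ} (hr : 1 ≤ r)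
    (hc : (b ^ 2 * r ^ 2 : ℝ) * Real.exp (-(g * c)) ≤ 1) (hn : n ≠ 0) (hnb : n ≤ b ^ (l + 1))
    (hnonneg : 0 ≤ 1 - g * ((l + 1 : ℕ) / n)) :
    ((n * r ^ (2 * l)) * n * (1 - g * ((l + 1 : ℕ) / n)) ^ (c * n) : ℝ) ≤ 1 := by
  have hnb' : (n : ℝ) ≤ b ^ (l + 1) := by exact_mod_cast hnb
  have hr' : (1 : ℝ) ≤ r := by exact_mod_cast hr
  calc ((n * r ^ (2 * l)) * n * (1 - g * ((l + 1 : ℕ) / n)) ^ (c * n) : ℝ)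
      ≤ (b ^ (l + 1) * r ^ (2 * (l + 1))) * b ^ (l + 1) * Real.exp (-(g * c)) ^ (l + 1) := by
        gcongr ?_ * ?_ * ?_ * ?_
        · exact pow_le_pow_right₀ hr' (by omega)
        · exact one_sub_mul_div_pow_le_exp_pow hn hnonneg
    _ = ((b ^ 2 * r ^ 2) * Real.exp (-(g * c))) ^ (l + 1) := by
        rw [pow_mul, ← mul_pow, ← mul_pow, ← mul_pow]
        ring
    _ ≤ 1 := pow_le_one₀ (by positivity) hc

-- The `n * r ^ (2 * l)` sets to be hit are each missed for `c * n` steps with probability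
-- exponentially small in `l`, which beats the union bound because `n` is at most `b ^ (l + 1)`.
theorem exists_ecoverTime_le {r b : ℕ} (hr : 4 ≤ r) (hr_even : Even r) (hb : 1 ≤ b) {h : ℝ}
    (hh0 : 0 < h) (hh1 : h ≤ 1) :
    ∃ C : ℝ, 0 < C ∧ ∀ (V : Type*) [Fintype V] (G : SimpleGraph V) (l : ℕ),
      l < Fintype.card V → Fintype.card V ≤ b ^ (l + 1) → G.IsRegularOfDegree r →
      LocallySparse G l → EdgeExpansionAtLeast G h → ∀ A : List V → V, ValidRule G A →
        ∀ u : V, ecoverTime G A u ≤ ENNReal.ofReal (C * Fintype.card V) := by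
  have hr0 : (4 : ℝ) ≤ r := by exact_mod_cast hr
  set g := (h / r) ^ 2 / 2 with hg
  have hg0 : 0 < g := by positivity
  have hg1 : g < 1 := by
    have hratio : h / r ≤ 1 := div_le_one_of_le₀ (by linarith) (by linarith)
    have hsq : (h / r) ^ 2 ≤ 1 := pow_le_one₀ (by positivity) hratio
    linarith
  obtain ⟨c, hc⟩ := exists_nat_mul_exp_neg_le_one (a := b ^ 2 * r ^ 2) (by positivity) hg0
  refine ⟨r + 1 + c + g⁻¹, by positivity, fun V _ G l hl hnb hreg hsparse hexp A hA u => ?_⟩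
  set n := Fintype.card V
  have hn : n ≠ 0 := by omega
  have hn1 : (1 : ℝ) ≤ n := by exact_mod_cast Nat.one_le_iff_ne_zero.2 hn
  set q := 1 - g * ((l + 1 : ℕ) / n) with hq
  have hq0 : 0 < q := by
    have hfrac : ((l + 1 : ℕ) / n : ℝ) ≤ 1 :=
      div_le_one_of_le₀ (by exact_mod_cast hl) n.cast_nonneg
    nlinarith
  have hq1 : (1 - q)⁻¹ ≤ g⁻¹ * n := by
    have hl1 : (1 : ℝ) ≤ (l + 1 : ℕ) := by exact_mod_cast Nat.le_add_left 1 l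
    rw [hq, sub_sub_cancel, mul_inv, inv_div ((l + 1 : ℕ) : ℝ)]
    exact mul_le_mul_of_nonneg_left (div_le_self n.cast_nonneg hl1) (by positivity)
  have hgeom : ∀ t, uncovProb G A u (t + (c * n + 1 + r * n)) ≤ q ^ t := fun t =>
    calc uncovProb G A u (t + (c * n + 1 + r * n))
        ≤ (n * r ^ (2 * l)) * (q ^ (t + c * n) * n) :=
          uncovProb_le_of_expansion hA hr hr_even hreg hh0.le hexp hsparse
            (by rw [hq, hg, Nat.cast_succ]) hq0
            (show t + c * n + 1 + r * n ≤ _ by omega) u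
      _ = (n * r ^ (2 * l)) * n * q ^ (c * n) * q ^ t := by ring
      _ ≤ q ^ t := mul_le_of_le_one_left (by positivity)
          (mul_pow_mul_one_sub_pow_le_one (by omega) hc hn hnb hq0.le)
  calc ecoverTime G A u ≤ ENNReal.ofReal ((c * n + 1 + r * n : ℕ) + (1 - q)⁻¹) :=
        tsum_ofReal_le_of_eventually_geometric hq0.le
          (sub_lt_self 1 (by positivity)) (uncovProb_le_one hA u) hgeom
    _ ≤ ENNReal.ofReal ((r + 1 + c + g⁻¹) * n) := by
        refine ENNReal.ofReal_le_ofReal ?_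
        push_cast
        linarith

end CoverTime

/-! ### Switchings of regular graphs -/

section Switching

variable {V : Type*} {G : SimpleGraph V} {x y z w : V}

/-- The switching of the edges `xy`, `zw` of `G`: they are replaced by the edges `xz`, `yw`. -/
def edgeSwitch (G : SimpleGraph V) (x y z w : V) : SimpleGraph V :=
  SimpleGraph.fromEdgeSet ((G.edgeSet \ {s(x, y), s(z, w)}) ∪ {s(x, z), s(y, w)})

/-- The edges `xy`, `zw` can be switched without creating loops or multiple edges. -/
structure Switchable (G : SimpleGraph V) (x y z w : V) : Prop where
  adj_fst : G.Adj x y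
  adj_snd : G.Adj z w
  ne_fst : x ≠ z
  ne_snd : y ≠ w
  ne_cross : x ≠ w
  not_adj_fst : ¬ G.Adj x z
  not_adj_snd : ¬ G.Adj y w

lemma edgeSet_edgeSwitch (hxz : x ≠ z) (hyw : y ≠ w) :
    (edgeSwitch G x y z w).edgeSet =
      (G.edgeSet \ {s(x, y), s(z, w)}) ∪ {s(x, z), s(y, w)} := by
  rw [edgeSwitch, SimpleGraph.edgeSet_fromEdgeSet, sdiff_eq_left, Set.disjoint_left]
  rintro e ((⟨he, -⟩ | rfl | rfl))
  · exact G.not_isDiag_of_mem_edgeSet he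
  · simpa using hxz
  · simpa using hyw

lemma Switchable.edgeSwitch_edgeSwitch (h : Switchable G x y z w) :
    edgeSwitch (edgeSwitch G x y z w) x z y w = G := by
  refine SimpleGraph.edgeSet_injective ?_
  rw [edgeSet_edgeSwitch h.adj_fst.ne h.adj_snd.ne, edgeSet_edgeSwitch h.ne_fst h.ne_snd]
  have hxy : s(x, y) ∈ G.edgeSet := h.adj_fst
  have hzw : s(z, w) ∈ G.edgeSet := h.adj_snd
  have hxz : s(x, z) ∉ G.edgeSet := h.not_adj_fst
  have hyw : s(y, w) ∉ G.edgeSet := h.not_adj_snd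
  ext e
  simp only [Set.mem_union, Set.mem_sdiff, Set.mem_insert_iff, Set.mem_singleton_iff]
  grind

lemma Switchable.ite_adj_edgeSwitch (h : Switchable G x y z w) (p q : V) :
    (if (edgeSwitch G x y z w).Adj p q then 1 else 0) +
        (if s(p, q) = s(x, y) then 1 else 0) + (if s(p, q) = s(z, w) then 1 else 0) =
      (if G.Adj p q then 1 else 0) +
        (if s(p, q) = s(x, z) then 1 else 0) + (if s(p, q) = s(y, w) then 1 else 0) := by
  have hxy : s(x, y) ∈ G.edgeSet := h.adj_fst
  have hzw : s(z, w) ∈ G.edgeSet := h.adj_snd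
  have hxz : s(x, z) ∉ G.edgeSet := h.not_adj_fst
  have hyw : s(y, w) ∉ G.edgeSet := h.not_adj_snd
  have hold : s(x, y) ≠ s(z, w) := by simp [h.ne_fst, h.ne_cross]
  have hnew : s(x, z) ≠ s(y, w) := by simp [h.adj_fst.ne, h.ne_cross]
  simp only [← SimpleGraph.mem_edgeSet, edgeSet_edgeSwitch h.ne_fst h.ne_snd, Set.mem_union,
    Set.mem_sdiff, Set.mem_insert_iff, Set.mem_singleton_iff]
  grind

/-- The number of pairs in `P ×ˢ Q` that form the unordered pair `{a, b}`. -/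
noncomputable def pairCount (P Q : Finset V) (a b : V) : ℕ :=
  ((P ×ˢ Q).filter fun e => s(e.1, e.2) = s(a, b)).card

lemma pairCount_eq (P Q : Finset V) {a b : V} (hab : a ≠ b) :
    pairCount P Q a b =
      (if a ∈ P ∧ b ∈ Q then 1 else 0) + if b ∈ P ∧ a ∈ Q then 1 else 0 := by
  have hsplit : ((P ×ˢ Q).filter fun e => s(e.1, e.2) = s(a, b)) =
      ((P ×ˢ Q).filter fun e => e = (a, b)) ∪ (P ×ˢ Q).filter fun e => e = (b, a) := by
    rw [← Finset.filter_or]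
    simp [Prod.ext_iff]
  have hdisj : Disjoint ((P ×ˢ Q).filter fun e => e = (a, b))
      ((P ×ˢ Q).filter fun e => e = (b, a)) := by
    rw [Finset.disjoint_filter]
    rintro e - rfl hba
    exact hab (Prod.ext_iff.1 hba).1
  rw [pairCount, hsplit, Finset.card_union_of_disjoint hdisj, Finset.filter_eq',
    Finset.filter_eq']
  simp only [Finset.mem_product]
  split_ifs <;> rfl

lemma Switchable.card_interedges_edgeSwitch (h : Switchable G x y z w) (P Q : Finset V) :
    ((edgeSwitch G x y z w).interedges P Q).card + pairCount P Q x y + pairCount P Q z w =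
      (G.interedges P Q).card + pairCount P Q x z + pairCount P Q y w := by
  simp only [SimpleGraph.interedges_def, pairCount, Finset.card_filter,
    ← Finset.sum_add_distrib, h.ite_adj_edgeSwitch]

variable [Fintype V]

lemma card_interedges_singleton_univ (p : V) :
    (G.interedges {p} Finset.univ).card = G.degree p := by
  rw [card_interedges_eq_sum, Finset.sum_singleton, ← SimpleGraph.card_neighborFinset_eq_degree,
    SimpleGraph.neighborFinset_eq_filter]

lemma Switchable.degree_edgeSwitch (h : Switchable G x y z w) (p : V) :
    (edgeSwitch G x y z w).degree p = G.degree p := by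
  have hcount := h.card_interedges_edgeSwitch {p} Finset.univ
  rw [pairCount_eq _ _ h.adj_fst.ne, pairCount_eq _ _ h.adj_snd.ne, pairCount_eq _ _ h.ne_fst,
    pairCount_eq _ _ h.ne_snd] at hcount
  simp only [card_interedges_singleton_univ, Finset.mem_univ, and_true] at hcount
  omega

/-- The `r`-regular graphs on `V`. -/
noncomputable def regularGraphs (V : Type*) [Fintype V] (r : ℕ) : Finset (SimpleGraph V) :=
  Finset.univ.filter fun G => G.IsRegularOfDegree r

/-- The `r`-regular graphs with exactly `b` edges between `U` and its complement. -/
noncomputable def regularGraphsWithCut (r : ℕ) (U : Finset V) (b : ℕ) :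
    Finset (SimpleGraph V) :=
  (regularGraphs V r).filter fun G => (G.interedges U Uᶜ).card = b

variable {r b : ℕ} {U : Finset V}

lemma mem_regularGraphs : G ∈ regularGraphs V r ↔ G.IsRegularOfDegree r := by
  simp [regularGraphs]

lemma mem_regularGraphsWithCut :
    G ∈ regularGraphsWithCut r U b ↔
      G.IsRegularOfDegree r ∧ (G.interedges U Uᶜ).card = b := by
  rw [regularGraphsWithCut, Finset.mem_filter, mem_regularGraphs]

lemma Switchable.edgeSwitch_mem_regularGraphsWithCut (h : Switchable G x y z w)
    (hG : G ∈ regularGraphsWithCut r U b) (hx : x ∈ U) (hy : y ∈ U) (hz : z ∉ U) (hw : w ∉ U) :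
    edgeSwitch G x y z w ∈ regularGraphsWithCut r U (b + 2) := by
  rw [mem_regularGraphsWithCut] at hG ⊢
  refine ⟨fun p => ?_, ?_⟩
  · rw [h.degree_edgeSwitch, hG.1.degree_eq]
  · have hcount := h.card_interedges_edgeSwitch U Uᶜ
    rw [pairCount_eq _ _ h.adj_fst.ne, pairCount_eq _ _ h.adj_snd.ne, pairCount_eq _ _ h.ne_fst,
      pairCount_eq _ _ h.ne_snd, hG.2] at hcount
    simpa [hx, hy, hz, hw] using hcount

/-- The pairs `((x, y), (z, w))` of an edge inside `U` and an edge outside `U`, both oriented,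
whose switching adds the edges `xz` and `yw` to the cut. -/
noncomputable def switchablePairs (G : SimpleGraph V) (U : Finset V) :
    Finset ((V × V) × (V × V)) :=
  (G.interedges U U ×ˢ G.interedges Uᶜ Uᶜ).filter
    fun e => ¬ G.Adj e.1.1 e.2.1 ∧ ¬ G.Adj e.1.2 e.2.2

lemma mem_switchablePairs :
    ((x, y), (z, w)) ∈ switchablePairs G U ↔
      (x ∈ U ∧ y ∈ U ∧ z ∉ U ∧ w ∉ U) ∧ Switchable G x y z w := by
  simp only [switchablePairs, Finset.mem_filter, Finset.mem_product,
    SimpleGraph.mem_interedges_iff, Finset.mem_compl]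
  constructor
  · rintro ⟨⟨⟨hx, hy, hxy⟩, hz, hw, hzw⟩, hxz, hyw⟩
    exact ⟨⟨hx, hy, hz, hw⟩, hxy, hzw, ne_of_mem_of_not_mem hx hz, ne_of_mem_of_not_mem hy hw,
      ne_of_mem_of_not_mem hx hw, hxz, hyw⟩
  · rintro ⟨⟨hx, hy, hz, hw⟩, h⟩
    exact ⟨⟨⟨hx, hy, h.adj_fst⟩, hz, hw, h.adj_snd⟩, h.not_adj_fst, h.not_adj_snd⟩

lemma card_filter_fst_adj_le (hreg : G.IsRegularOfDegree r) (U : Finset V) :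
    ((G.interedges U U ×ˢ G.interedges Uᶜ Uᶜ).filter fun e => G.Adj e.1.1 e.2.1).card ≤
      r ^ 2 * (G.interedges U Uᶜ).card := by
  refine Finset.card_le_mul_card_image_of_maps_to (f := fun e => (e.1.1, e.2.1)) ?_ _ ?_
  · rintro ⟨⟨x, y⟩, z, w⟩ he
    simp_all [SimpleGraph.mem_interedges_iff]
  · rintro ⟨x, z⟩ -
    calc _ ≤ ((({x} : Finset V) ×ˢ G.neighborFinset x) ×ˢ
            (({z} : Finset V) ×ˢ G.neighborFinset z)).card := Finset.card_le_card fun e he => by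
          simp only [Finset.mem_filter, Finset.mem_product, SimpleGraph.mem_interedges_iff,
            Prod.ext_iff] at he
          simp only [Finset.mem_product, Finset.mem_singleton, SimpleGraph.mem_neighborFinset]
          grind
      _ = r ^ 2 := by simp [hreg.degree_eq, sq]

lemma card_filter_snd_adj_eq (G : SimpleGraph V) (U : Finset V) :
    ((G.interedges U U ×ˢ G.interedges Uᶜ Uᶜ).filter fun e => G.Adj e.1.2 e.2.2).card =
      ((G.interedges U U ×ˢ G.interedges Uᶜ Uᶜ).filter fun e => G.Adj e.1.1 e.2.1).card := by
  refine Finset.card_bij (fun e _ => (e.1.swap, e.2.swap)) ?_ ?_ ?_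
  · rintro ⟨⟨x, y⟩, z, w⟩ he
    simp_all [SimpleGraph.mem_interedges_iff, G.adj_comm]
  · rintro ⟨⟨x, y⟩, z, w⟩ - ⟨⟨x', y'⟩, z', w'⟩ - heq
    simp_all
  · rintro ⟨⟨x, y⟩, z, w⟩ he
    refine ⟨((y, x), (w, z)), ?_, rfl⟩
    simp_all [SimpleGraph.mem_interedges_iff, G.adj_comm]

lemma card_interedges_mul_le (hreg : G.IsRegularOfDegree r) (U : Finset V) :
    (G.interedges U U).card * (G.interedges Uᶜ Uᶜ).card ≤
      (switchablePairs G U).card + 2 * r ^ 2 * (G.interedges U Uᶜ).card := by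
  have hcover : G.interedges U U ×ˢ G.interedges Uᶜ Uᶜ ⊆ switchablePairs G U ∪
      (((G.interedges U U ×ˢ G.interedges Uᶜ Uᶜ).filter fun e => G.Adj e.1.1 e.2.1) ∪
        (G.interedges U U ×ˢ G.interedges Uᶜ Uᶜ).filter fun e => G.Adj e.1.2 e.2.2) := by
    intro e he
    simp only [switchablePairs, Finset.mem_union, Finset.mem_filter, he, true_and]
    tauto
  have hunion := (Finset.card_le_card hcover).trans (Finset.card_union_le _ _)
  have hunion' := Finset.card_union_le
    ((G.interedges U U ×ˢ G.interedges Uᶜ Uᶜ).filter fun e => G.Adj e.1.1 e.2.1)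
    ((G.interedges U U ×ˢ G.interedges Uᶜ Uᶜ).filter fun e => G.Adj e.1.2 e.2.2)
  rw [card_filter_snd_adj_eq] at hunion'
  rw [Finset.card_product] at hunion
  linarith [card_filter_fst_adj_le hreg U]

lemma sum_card_switchablePairs_le (r : ℕ) (U : Finset V) (b : ℕ) :
    ∑ G ∈ regularGraphsWithCut r U b, (switchablePairs G U).card ≤
      (regularGraphsWithCut r U (b + 2)).card * (b + 2) ^ 2 := by
  have hinj : ((regularGraphsWithCut r U b).sigma fun G => switchablePairs G U).card ≤
      ((regularGraphsWithCut r U (b + 2)).sigma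
        fun G => G.interedges U Uᶜ ×ˢ G.interedges U Uᶜ).card := by
    refine Finset.card_le_card_of_injOn (fun e => ⟨edgeSwitch e.1 e.2.1.1 e.2.1.2 e.2.2.1 e.2.2.2,
      ((e.2.1.1, e.2.2.1), (e.2.1.2, e.2.2.2))⟩) ?_ ?_
    · rintro ⟨G, ⟨x, y⟩, z, w⟩ he
      obtain ⟨hG, hpair⟩ := Finset.mem_sigma.1 he
      obtain ⟨⟨hx, hy, hz, hw⟩, hsw⟩ := mem_switchablePairs.1 hpair
      refine Finset.mem_sigma.2
        ⟨hsw.edgeSwitch_mem_regularGraphsWithCut hG hx hy hz hw, ?_⟩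
      simp [SimpleGraph.mem_interedges_iff, ← SimpleGraph.mem_edgeSet,
        edgeSet_edgeSwitch hsw.ne_fst hsw.ne_snd, hx, hy, hz, hw]
    · rintro ⟨G, ⟨x, y⟩, z, w⟩ he ⟨G', ⟨x', y'⟩, z', w'⟩ he' heq
      have hsw : Switchable G x y z w := (mem_switchablePairs.1 (Finset.mem_sigma.1 he).2).2
      have hsw' : Switchable G' x' y' z' w' :=
        (mem_switchablePairs.1 (Finset.mem_sigma.1 he').2).2
      simp only [Sigma.mk.injEq, heq_eq_eq, Prod.mk.injEq] at heq
      obtain ⟨hgraph, ⟨rfl, rfl⟩, rfl, rfl⟩ := heq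
      obtain rfl : G = G' := by
        rw [← hsw.edgeSwitch_edgeSwitch, hgraph, hsw'.edgeSwitch_edgeSwitch]
      rfl
  rw [Finset.card_sigma, Finset.card_sigma] at hinj
  refine hinj.trans_eq ?_
  rw [← smul_eq_mul, ← Finset.sum_const]
  refine Finset.sum_congr rfl fun G hG => ?_
  rw [Finset.card_product, (mem_regularGraphsWithCut.1 hG).2, sq]

lemma card_interedges_add_compl (hreg : G.IsRegularOfDegree r) (U W : Finset V) :
    (G.interedges U W).card + (G.interedges U Wᶜ).card = r * U.card := by
  rw [card_interedges_eq_sum, card_interedges_eq_sum, ← Finset.sum_add_distrib, mul_comm,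
    ← smul_eq_mul, ← Finset.sum_const]
  refine Finset.sum_congr rfl fun x _ => ?_
  rw [← Finset.card_union_of_disjoint (Finset.disjoint_filter_filter disjoint_compl_right),
    ← Finset.filter_union, Finset.union_compl, ← SimpleGraph.neighborFinset_eq_filter,
    SimpleGraph.card_neighborFinset_eq_degree, hreg.degree_eq]

lemma card_regularGraphsWithCut_mul_le (r : ℕ) (U : Finset V) (b : ℕ) :
    (regularGraphsWithCut r U b).card *
        ((r * U.card - b) * (r * Uᶜ.card - b) - 2 * r ^ 2 * b : ℝ) ≤
      (regularGraphsWithCut r U (b + 2)).card * (b + 2) ^ 2 := by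
  have hpairs : ∀ G ∈ regularGraphsWithCut r U b,
      ((r * U.card - b) * (r * Uᶜ.card - b) - 2 * r ^ 2 * b : ℝ) ≤ (switchablePairs G U).card := by
    intro G hG
    obtain ⟨hreg, hcut⟩ := mem_regularGraphsWithCut.1 hG
    have hin : ((G.interedges U U).card + b : ℝ) = r * U.card := by
      exact_mod_cast hcut ▸ card_interedges_add_compl hreg U U
    have hout : ((G.interedges Uᶜ Uᶜ).card + b : ℝ) = r * Uᶜ.card := by
      have hsymm : (G.interedges Uᶜ U).card = b :=
        have := G.symm
        hcut ▸ Rel.card_interedges_comm Uᶜ U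
      have hsum := card_interedges_add_compl hreg Uᶜ U
      rw [hsymm] at hsum
      exact_mod_cast (add_comm _ _).trans hsum
    have hmul : ((G.interedges U U).card * (G.interedges Uᶜ Uᶜ).card : ℝ) ≤
        (switchablePairs G U).card + 2 * r ^ 2 * b := by
      exact_mod_cast hcut ▸ card_interedges_mul_le hreg U
    rw [← hin, ← hout]
    linarith
  calc _ ≤ ∑ G ∈ regularGraphsWithCut r U b, ((switchablePairs G U).card : ℝ) := by
        simpa using Finset.card_nsmul_le_sum _ _ _ hpairs
    _ ≤ _ := by exact_mod_cast sum_card_switchablePairs_le r U b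

end Switching

/-! ### Edge expansion of random regular graphs -/

section Binomials

lemma cast_choose_succ_mul (m j : ℕ) :
    (m.choose (j + 1) : ℝ) * (j + 1) = m.choose j * (m - j) := by
  rcases le_or_gt j m with hjm | hmj
  · rw [← Nat.cast_sub hjm]
    exact_mod_cast Nat.choose_succ_right_eq m j
  · simp [Nat.choose_eq_zero_of_lt hmj, Nat.choose_eq_zero_of_lt (Nat.lt_succ_of_lt hmj)]

lemma choose_le_pow_mul_inv_pow {x : ℝ} (hx : 0 < x) (m k : ℕ) :
    (m.choose k : ℝ) ≤ (1 + x) ^ m * x⁻¹ ^ k := by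
  rcases le_or_gt k m with hkm | hmk
  · have hterm : x ^ k * m.choose k ≤ (x + 1) ^ m := by
      rw [add_pow]
      simpa using Finset.single_le_sum
        (f := fun i => x ^ i * 1 ^ (m - i) * (m.choose i : ℝ)) (fun i _ => by positivity)
        (Finset.mem_range.2 (Nat.lt_succ_of_le hkm))
    rw [inv_pow, ← div_eq_mul_inv, le_div_iff₀ (by positivity)]
    simpa only [mul_comm, add_comm] using hterm
  · rw [Nat.choose_eq_zero_of_lt hmk, Nat.cast_zero]
    positivity

lemma two_pow_le_choose_two_mul {m u : ℕ} (hmu : m ≤ u) : 2 ^ m ≤ (2 * u).choose m :=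
  calc 2 ^ m = ∑ i ∈ Finset.range (m + 1), m.choose i := (Nat.sum_range_choose m).symm
    _ ≤ ∑ i ∈ Finset.range (m + 1), m.choose i ^ 2 :=
        Finset.sum_le_sum fun _ _ => Nat.le_self_pow two_ne_zero _
    _ = (2 * m).choose m := Nat.sum_range_choose_sq m
    _ ≤ (2 * u).choose m := Nat.choose_le_choose _ (Nat.mul_le_mul_left 2 hmu)

lemma choose_le_four_pow_mul_choose_sub {N u j : ℕ} (hN : 4 * u + 3 * j ≤ 3 * N) :
    (N.choose j : ℝ) ≤ 4 ^ j * (N - u).choose j := by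
  induction j with
  | zero => simp
  | succ j ih =>
    have hsub : ((N - u : ℕ) : ℝ) = N - u := Nat.cast_sub (by omega)
    have hN' : (4 * u + 3 * (j + 1) : ℝ) ≤ 3 * N := by exact_mod_cast hN
    have : (0 : ℝ) ≤ u := u.cast_nonneg
    refine le_of_mul_le_mul_right ?_ (show (0 : ℝ) < j + 1 by positivity)
    calc (N.choose (j + 1) : ℝ) * (j + 1) = N.choose j * (N - j) := cast_choose_succ_mul N j
      _ ≤ 4 ^ j * (N - u).choose j * (4 * (N - u - j)) :=
          mul_le_mul (ih (by omega)) (by linarith) (by linarith) (by positivity)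
      _ = 4 ^ (j + 1) * ((N - u).choose j * ((N - u : ℕ) - j)) := by rw [hsub]; ring
      _ = 4 ^ (j + 1) * (N - u).choose (j + 1) * (j + 1) := by
          rw [← cast_choose_succ_mul, mul_assoc]

/-- The number of ways to choose `j` of `a` points on one side of a cut and `j` of `b` points on
the other side. Up to a bounded factor it satisfies the same recursion in `j` as the number of
regular graphs with `2 * j` edges across the cut. -/
noncomputable def crossWeight (a b j : ℕ) : ℝ := a.choose j * b.choose j

lemma crossWeight_pos {a b j : ℕ} (ha : j ≤ a) (hb : j ≤ b) : 0 < crossWeight a b j :=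
  mul_pos (Nat.cast_pos.2 (Nat.choose_pos ha)) (Nat.cast_pos.2 (Nat.choose_pos hb))

lemma crossWeight_succ_mul (a b j : ℕ) :
    crossWeight a b (j + 1) * (j + 1 : ℝ) ^ 2 = crossWeight a b j * ((a - j) * (b - j)) :=
  calc _ = (a.choose (j + 1) * (j + 1) : ℝ) * (b.choose (j + 1) * (j + 1)) := by
        rw [crossWeight]; ring
    _ = _ := by rw [cast_choose_succ_mul, cast_choose_succ_mul, crossWeight]; ring

variable {n u j : ℕ}

lemma choose_mul_choose_mul_le (hu : 2 * u ≤ n) (hj : 100 * j < u) :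
    (n.choose u * (2 * (n - u)).choose j * n : ℝ) ≤
      4 ^ (j + 1) * (j + 1) * (j + u + 1).choose u * (2 * (n - u)).choose (j + u + 1) := by
  obtain ⟨N, hN⟩ : ∃ N, N = 2 * (n - u) := ⟨_, rfl⟩
  rw [← hN]
  have hshift : (n : ℝ) ≤ 4 * ((N - u : ℕ) - j) := by
    have : ((n + 4 * j : ℕ) : ℝ) ≤ (4 * (N - u) : ℕ) := Nat.cast_le.2 (by omega)
    push_cast at this
    linarith
  have hsplit : (N.choose u * (N - u).choose (j + 1) : ℝ) =
      N.choose (j + u + 1) * (j + u + 1).choose u := by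
    have := Nat.choose_mul (n := N) (k := j + u + 1) (s := u) (by omega)
    rw [show j + u + 1 - u = j + 1 by omega] at this
    exact_mod_cast this.symm
  calc (n.choose u * N.choose j * n : ℝ)
      ≤ N.choose u * (4 ^ j * (N - u).choose j) * (4 * ((N - u : ℕ) - j)) := by
        gcongr
        · omega
        · exact choose_le_four_pow_mul_choose_sub (by omega)
    _ = 4 ^ (j + 1) * N.choose u * ((N - u).choose j * ((N - u : ℕ) - j)) := by ring
    _ = 4 ^ (j + 1) * (j + 1) * (N.choose u * (N - u).choose (j + 1)) := by
        rw [← cast_choose_succ_mul]; ring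
    _ = _ := by rw [hsplit]; ring

lemma two_pow_le_two_pow_mul_choose (hj : j < u) :
    2 ^ u ≤ 2 ^ (j + 1) * (2 * u).choose (j + u + 1) := by
  have hsymm : (2 * u).choose (u - (j + 1)) = (2 * u).choose (j + u + 1) := by
    rw [← Nat.choose_symm (by omega), show 2 * u - (u - (j + 1)) = j + u + 1 by omega]
  calc 2 ^ u = 2 ^ (j + 1) * 2 ^ (u - (j + 1)) := by
        rw [← pow_add, Nat.add_sub_cancel' hj]
    _ ≤ _ := Nat.mul_le_mul_left _ (hsymm ▸ two_pow_le_choose_two_mul (Nat.sub_le _ _))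

-- Since `j < u / 100`, both binomial coefficients are at most `(1 + ε) ^ u` for a small `ε`.
lemma pow_mul_choose_mul_choose_le (hj : 100 * j < u) :
    ((21 / 20) ^ (u + 1) * (2 * u).choose j * (j + u + 1).choose u * 8 ^ (j + 1) : ℝ) ≤
      900 * (7 / 5) ^ u := by
  have hsmall : (80800 : ℝ) ^ j ≤ (112 / 100) ^ u :=
    calc (80800 : ℝ) ^ j ≤ ((112 / 100) ^ 100) ^ j := by gcongr; norm_num
      _ = (112 / 100) ^ (100 * j) := (pow_mul _ _ _).symm
      _ ≤ _ := pow_le_pow_right₀ (by norm_num) hj.le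
  have hchoose : ∀ m k : ℕ, (m.choose k : ℝ) ≤ (101 / 100) ^ m * 100 ^ k := fun m k => by
    refine (choose_le_pow_mul_inv_pow (x := 1 / 100) (by norm_num) m k).trans_eq ?_
    norm_num
  have hchoose' : ((j + u + 1).choose u : ℝ) ≤ (101 / 100) ^ (j + u + 1) * 100 ^ (j + 1) := by
    rw [Nat.choose_symm_of_eq_add (show j + u + 1 = u + (j + 1) by ring)]
    exact hchoose _ _
  calc _ ≤ (21 / 20 : ℝ) ^ (u + 1) * ((101 / 100) ^ (2 * u) * 100 ^ j) *
          ((101 / 100) ^ (j + u + 1) * 100 ^ (j + 1)) * 8 ^ (j + 1) := by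
        gcongr
        exact hchoose _ _
    _ = 21 / 20 * (101 / 100) * 800 * (21 / 20 * (101 / 100) ^ 3) ^ u *
          (100 * (101 / 100) * 100 * 8) ^ j := by
        generalize (101 / 100 : ℝ) = a
        simp only [mul_pow, pow_add, pow_mul]
        ring
    _ ≤ 900 * (21 / 20 * (101 / 100) ^ 3) ^ u * (112 / 100) ^ u := by
        gcongr
        · norm_num
        · exact le_of_eq_of_le (by norm_num) hsmall
    _ = 900 * (21 / 20 * (101 / 100) ^ 3 * (112 / 100)) ^ u := by rw [mul_assoc, ← mul_pow]
    _ ≤ _ := by gcongr; norm_num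

lemma choose_mul_pow_mul_crossWeight_le (hu : 2 * u ≤ n) (hj : 100 * j < u) :
    n.choose u * ((21 / 20) ^ (u + 1) * crossWeight (2 * u) (2 * (n - u)) j) ≤
      900 * (j + 1) / n * (7 / 10) ^ u * crossWeight (2 * u) (2 * (n - u)) (j + u + 1) := by
  have hn : (0 : ℝ) < n := Nat.cast_pos.2 (by omega)
  have htwo : (2 : ℝ) ^ u ≤ 2 ^ (j + 1) * (2 * u).choose (j + u + 1) := by
    exact_mod_cast two_pow_le_two_pow_mul_choose (show j < u by omega)
  refine le_of_mul_le_mul_right ?_ (show (0 : ℝ) < n * 2 ^ u by positivity)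
  rw [crossWeight, crossWeight]
  calc _ = (21 / 20 : ℝ) ^ (u + 1) * (2 * u).choose j *
          (n.choose u * (2 * (n - u)).choose j * n) * 2 ^ u := by ring
    _ ≤ (21 / 20 : ℝ) ^ (u + 1) * (2 * u).choose j *
          (4 ^ (j + 1) * (j + 1) * (j + u + 1).choose u * (2 * (n - u)).choose (j + u + 1)) *
          (2 ^ (j + 1) * (2 * u).choose (j + u + 1)) :=
        mul_le_mul (mul_le_mul_of_nonneg_left (choose_mul_choose_mul_le hu hj) (by positivity))
          htwo (by positivity) (by positivity)
    _ = ((21 / 20) ^ (u + 1) * (2 * u).choose j * (j + u + 1).choose u * 8 ^ (j + 1) : ℝ) *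
          ((j + 1) * ((2 * u).choose (j + u + 1) * (2 * (n - u)).choose (j + u + 1))) := by
        rw [show (8 : ℝ) = 4 * 2 by norm_num, mul_pow (4 : ℝ)]
        ring
    _ ≤ 900 * (7 / 5) ^ u *
          ((j + 1) * ((2 * u).choose (j + u + 1) * (2 * (n - u)).choose (j + u + 1))) :=
        mul_le_mul_of_nonneg_right (pow_mul_choose_mul_choose_le hj) (by positivity)
    _ = _ := by
        rw [show (7 / 5 : ℝ) = 7 / 10 * 2 by norm_num, mul_pow (7 / 10 : ℝ)]
        field_simp

end Binomials

lemma le_pow_mul_of_le_mul_succ {f : ℕ → ℝ} {c : ℝ} (hc : 0 ≤ c) {a m : ℕ}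
    (hstep : ∀ k < m, f (a + k) ≤ c * f (a + k + 1)) : f a ≤ c ^ m * f (a + m) := by
  induction m with
  | zero => simp
  | succ m ih =>
    calc f a ≤ c ^ m * f (a + m) := ih fun k hk => hstep k (hk.trans m.lt_succ_self)
      _ ≤ c ^ m * (c * f (a + m + 1)) :=
          mul_le_mul_of_nonneg_left (hstep m m.lt_succ_self) (pow_nonneg hc m)
      _ = c ^ (m + 1) * f (a + (m + 1)) := by rw [pow_succ, mul_assoc, add_assoc]

section Expansion

lemma mul_le_switchingRate {d j u n : ℝ} (hd : 2 ≤ d) (hj : 0 ≤ j) (hju : 2 * j ≤ 3 * u)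
    (hun : 2 * u ≤ n) (hn : 4032 ≤ n) :
    20 / 21 * ((2 * u - j) * (2 * (n - u) - j)) ≤
      (d * u - j) * (d * (n - u) - j) - 4 * d ^ 2 * j := by
  have hp : j / 3 ≤ 2 * u - j := by linarith
  have hq : n / 4 ≤ 2 * (n - u) - j := by linarith
  have hpq : 336 * j ≤ (2 * u - j) * (2 * (n - u) - j) :=
    calc 336 * j ≤ j / 3 * (n / 4) := by nlinarith
      _ ≤ _ := mul_le_mul hp hq (by linarith) (by linarith)
  have hfst : d / 2 * (2 * u - j) ≤ d * u - j := by nlinarith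
  have hsnd : d / 2 * (2 * (n - u) - j) ≤ d * (n - u) - j := by nlinarith
  have hd4 : 1 ≤ d ^ 2 / 4 := by nlinarith
  have hprod := mul_le_mul hfst hsnd
    (mul_nonneg (by linarith) (by linarith)) ((mul_nonneg (by linarith) (by linarith)).trans hfst)
  calc 20 / 21 * ((2 * u - j) * (2 * (n - u) - j))
      ≤ (2 * u - j) * (2 * (n - u) - j) - 16 * j := by linarith
    _ ≤ d ^ 2 / 4 * ((2 * u - j) * (2 * (n - u) - j) - 16 * j) :=
        le_mul_of_one_le_left (by linarith) hd4
    _ ≤ _ := by linarith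

variable {V : Type*} [Fintype V] {d : ℕ} {U : Finset V} {j : ℕ}

lemma card_regularGraphsWithCut_two_mul_mul_le (d : ℕ) (U : Finset V) (j : ℕ) :
    (regularGraphsWithCut (2 * d) U (2 * j)).card *
        ((d * U.card - j) * (d * (Fintype.card V - U.card) - j) - 4 * d ^ 2 * j : ℝ) ≤
      (regularGraphsWithCut (2 * d) U (2 * (j + 1))).card * (j + 1) ^ 2 := by
  have hswitch := card_regularGraphsWithCut_mul_le (2 * d) U (2 * j)
  rw [Finset.card_compl, Nat.cast_sub (Finset.card_le_univ U)] at hswitch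
  push_cast at hswitch
  rw [mul_add, mul_one]
  linarith

lemma regularGraphsWithCut_subset (r : ℕ) (U : Finset V) (b : ℕ) :
    regularGraphsWithCut r U b ⊆ regularGraphs V r :=
  Finset.filter_subset _ _

lemma card_regularGraphsWithCut_div_crossWeight_le (hd : 2 ≤ d)
    (hn : 4032 ≤ Fintype.card V) (hU : 2 * U.card ≤ Fintype.card V) (hj : 2 * j ≤ 3 * U.card)
    (hjU : j < 2 * U.card) :
    (regularGraphsWithCut (2 * d) U (2 * j)).card /
        crossWeight (2 * U.card) (2 * (Fintype.card V - U.card)) j ≤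
      21 / 20 * ((regularGraphsWithCut (2 * d) U (2 * (j + 1))).card /
        crossWeight (2 * U.card) (2 * (Fintype.card V - U.card)) (j + 1)) := by
  set w := crossWeight (2 * U.card) (2 * (Fintype.card V - U.card))
  have hw : w (j + 1) * (j + 1) ^ 2 =
      w j * ((2 * U.card - j) * (2 * (Fintype.card V - U.card) - j)) := by
    simpa [Nat.cast_sub (Finset.card_le_univ U)] using
      crossWeight_succ_mul (2 * U.card) (2 * (Fintype.card V - U.card)) j
  have hw0 : 0 < w j := crossWeight_pos (by omega) (by omega)
  have hw1 : 0 < w (j + 1) := crossWeight_pos (by omega) (by omega)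
  have hrate := mul_le_switchingRate (d := d) (j := j) (u := U.card) (n := Fintype.card V)
    (by exact_mod_cast hd) j.cast_nonneg (by exact_mod_cast hj) (by exact_mod_cast hU)
    (by exact_mod_cast hn)
  have hstep := (mul_le_mul_of_nonneg_left hrate
    (regularGraphsWithCut (2 * d) U (2 * j)).card.cast_nonneg).trans
    (card_regularGraphsWithCut_two_mul_mul_le d U j)
  rw [← mul_div_assoc, div_le_div_iff₀ hw0 hw1]
  refine le_of_mul_le_mul_right ?_ (show (0 : ℝ) < (j + 1) ^ 2 by positivity)
  linear_combination (21 / 20 * w j) * hstep +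
    ((regularGraphsWithCut (2 * d) U (2 * j)).card : ℝ) * hw

lemma choose_mul_card_regularGraphsWithCut_le (hd : 2 ≤ d) (hn : 4032 ≤ Fintype.card V)
    (hU : 2 * U.card ≤ Fintype.card V) (hj : 100 * j < U.card) :
    ((Fintype.card V).choose U.card : ℝ) * (regularGraphsWithCut (2 * d) U (2 * j)).card ≤
      900 * (j + 1) / Fintype.card V * (7 / 10) ^ U.card * (regularGraphs V (2 * d)).card := by
  set w := crossWeight (2 * U.card) (2 * (Fintype.card V - U.card))
  have hw0 : 0 < w j := crossWeight_pos (by omega) (by omega)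
  have hw1 : 0 < w (j + U.card + 1) := crossWeight_pos (by omega) (by omega)
  have hchain := le_pow_mul_of_le_mul_succ
    (f := fun i => (regularGraphsWithCut (2 * d) U (2 * i)).card / w i)
    (show (0 : ℝ) ≤ 21 / 20 by norm_num) (a := j) (m := U.card + 1)
    fun k _ => card_regularGraphsWithCut_div_crossWeight_le hd hn hU (by omega) (by omega)
  rw [← add_assoc, div_le_iff₀ hw0] at hchain
  calc ((Fintype.card V).choose U.card : ℝ) * (regularGraphsWithCut (2 * d) U (2 * j)).card
      ≤ (Fintype.card V).choose U.card * ((21 / 20) ^ (U.card + 1) *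
          ((regularGraphs V (2 * d)).card / w (j + U.card + 1)) * w j) := by
        refine mul_le_mul_of_nonneg_left (hchain.trans ?_) (Nat.cast_nonneg _)
        gcongr
        exact regularGraphsWithCut_subset _ _ _
    _ = (Fintype.card V).choose U.card * ((21 / 20) ^ (U.card + 1) * w j) /
          w (j + U.card + 1) * (regularGraphs V (2 * d)).card := by ring
    _ ≤ _ := by
        gcongr
        rw [div_le_iff₀ hw1]
        exact choose_mul_pow_mul_crossWeight_le hU hj

end Expansion

section UnionBound

variable {V : Type*}

lemma even_card_interedges_self (G : SimpleGraph V) (U : Finset V) :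
    Even (G.interedges U U).card := by
  rw [even_iff_two_dvd, ← ZMod.natCast_eq_zero_iff, Finset.card_eq_sum_ones, Nat.cast_sum]
  refine Finset.sum_involution (fun e _ => e.swap) (fun e _ => by decide) ?_ ?_ fun e _ => rfl
  · rintro ⟨x, y⟩ he - heq
    exact (G.mem_interedges_iff.1 he).2.2.ne (Prod.ext_iff.1 heq).2
  · rintro ⟨x, y⟩ he
    obtain ⟨hx, hy, hxy⟩ := G.mem_interedges_iff.1 he
    exact G.mem_interedges_iff.2 ⟨hy, hx, hxy.symm⟩

variable [Fintype V]

lemma card_filter_exists_finset_le {α : Type*} (S : Finset α) (I : Finset ℕ)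
    {P : α → Finset V → Prop} [∀ U, DecidablePred fun a => P a U]
    [DecidablePred fun a => ∃ U : Finset V, U.card ∈ I ∧ P a U] {c : ℕ → ℝ} (hc : ∀ u ∈ I, 0 ≤ c u)
    (hP : ∀ U : Finset V, U.card ∈ I →
      (Fintype.card V).choose U.card * ((S.filter fun a => P a U).card : ℝ) ≤ c U.card) :
    ((S.filter fun a => ∃ U : Finset V, U.card ∈ I ∧ P a U).card : ℝ) ≤ ∑ u ∈ I, c u := by
  have hsub : (S.filter fun a => ∃ U : Finset V, U.card ∈ I ∧ P a U) ⊆ I.biUnion fun u =>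
      (Finset.univ.powersetCard u).biUnion fun U => S.filter fun a => P a U := by
    intro a ha
    obtain ⟨haS, U, hU, hPaU⟩ := Finset.mem_filter.1 ha
    simp only [Finset.mem_biUnion, Finset.mem_powersetCard, Finset.mem_filter]
    exact ⟨U.card, hU, U, ⟨Finset.subset_univ U, rfl⟩, haS, hPaU⟩
  have hsum : ((S.filter fun a => ∃ U : Finset V, U.card ∈ I ∧ P a U).card : ℝ) ≤
      ∑ u ∈ I, ∑ U ∈ (Finset.univ : Finset V).powersetCard u,
        ((S.filter fun a => P a U).card : ℝ) := by
    exact_mod_cast (Finset.card_le_card hsub).trans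
      (Finset.card_biUnion_le.trans (Finset.sum_le_sum fun u _ => Finset.card_biUnion_le))
  refine hsum.trans (Finset.sum_le_sum fun u hu => ?_)
  rcases le_or_gt u (Fintype.card V) with huV | hVu
  · have hchoose : (0 : ℝ) < (Fintype.card V).choose u := Nat.cast_pos.2 (Nat.choose_pos huV)
    calc _ ≤ ∑ _U ∈ (Finset.univ : Finset V).powersetCard u, c u / (Fintype.card V).choose u :=
          Finset.sum_le_sum fun U hU => by
            obtain ⟨-, rfl⟩ := Finset.mem_powersetCard.1 hU
            rw [le_div_iff₀' hchoose]
            exact hP U hu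
      _ = c u := by
          rw [Finset.sum_const, Finset.card_powersetCard, Finset.card_univ, nsmul_eq_mul,
            mul_div_cancel₀ _ hchoose.ne']
  · rw [Finset.powersetCard_eq_empty.2 (by rwa [Finset.card_univ]), Finset.sum_empty]
    exact hc u hu

variable {G : SimpleGraph V} {d : ℕ} {U : Finset V}

lemma exists_mem_regularGraphsWithCut (hreg : G.IsRegularOfDegree (2 * d)) (U : Finset V) :
    ∃ e ≤ d * U.card, (G.interedges U U).card = 2 * e ∧
      G ∈ regularGraphsWithCut (2 * d) U (2 * (d * U.card - e)) := by
  obtain ⟨e, he⟩ := (even_card_interedges_self G U).exists_two_nsmul _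
  rw [smul_eq_mul] at he
  have hsum := card_interedges_add_compl hreg U U
  rw [he, mul_assoc] at hsum
  refine ⟨e, by omega, he, mem_regularGraphsWithCut.2 ⟨hreg, ?_⟩⟩
  omega

lemma choose_mul_card_filter_cut_lt_le (hd : 2 ≤ d) (hn : 4032 ≤ Fintype.card V)
    (hU : 2 * U.card ≤ Fintype.card V) :
    (Fintype.card V).choose U.card * (((regularGraphs V (2 * d)).filter
        fun G => ((G.interedges U Uᶜ).card : ℝ) < 1 / 50 * U.card).card : ℝ) ≤
      900 * U.card ^ 2 / Fintype.card V * (7 / 10) ^ U.card * (regularGraphs V (2 * d)).card := by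
  set cuts := (Finset.range U.card).filter fun j => 100 * j < U.card with hcuts
  have hsub : ((regularGraphs V (2 * d)).filter
      fun G => ((G.interedges U Uᶜ).card : ℝ) < 1 / 50 * U.card) ⊆
      cuts.biUnion fun j => regularGraphsWithCut (2 * d) U (2 * j) := by
    intro G hG
    obtain ⟨hreg, hlt⟩ := Finset.mem_filter.1 hG
    obtain ⟨e, -, -, hmem⟩ := exists_mem_regularGraphsWithCut (mem_regularGraphs.1 hreg) U
    refine Finset.mem_biUnion.2 ⟨_, ?_, hmem⟩
    rw [(mem_regularGraphsWithCut.1 hmem).2, Nat.cast_mul, Nat.cast_ofNat] at hlt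
    have hlt' : 100 * (d * U.card - e) < U.card := by
      rify
      linarith
    exact Finset.mem_filter.2 ⟨Finset.mem_range.2 (by omega), hlt'⟩
  have hcard : (cuts.card : ℝ) ≤ U.card := by
    exact_mod_cast (Finset.card_filter_le _ _).trans_eq (Finset.card_range _)
  calc _ ≤ (Fintype.card V).choose U.card *
          ∑ j ∈ cuts, ((regularGraphsWithCut (2 * d) U (2 * j)).card : ℝ) := by
        refine mul_le_mul_of_nonneg_left ?_ (Nat.cast_nonneg _)
        exact_mod_cast (Finset.card_le_card hsub).trans Finset.card_biUnion_le
    _ ≤ ∑ _j ∈ cuts, 900 * U.card / Fintype.card V * (7 / 10) ^ U.card *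
          ((regularGraphs V (2 * d)).card : ℝ) := by
        rw [Finset.mul_sum]
        refine Finset.sum_le_sum fun j hj => ?_
        obtain ⟨hjU, hj100⟩ := Finset.mem_filter.1 hj
        have : (j + 1 : ℝ) ≤ U.card := by exact_mod_cast Finset.mem_range.1 hjU
        refine (choose_mul_card_regularGraphsWithCut_le hd hn hU hj100).trans ?_
        gcongr
    _ = cuts.card * (900 * U.card / Fintype.card V * (7 / 10) ^ U.card *
          ((regularGraphs V (2 * d)).card : ℝ)) := by rw [Finset.sum_const, nsmul_eq_mul]
    _ ≤ U.card * (900 * U.card / Fintype.card V * (7 / 10) ^ U.card *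
          ((regularGraphs V (2 * d)).card : ℝ)) := by gcongr
    _ = _ := by ring

lemma card_filter_not_edgeExpansionAtLeast_le (hd : 2 ≤ d) (hn : 4032 ≤ Fintype.card V) :
    (((regularGraphs V (2 * d)).filter fun G => ¬ EdgeExpansionAtLeast G (1 / 50)).card : ℝ) ≤
      900 * (∑' u : ℕ, (u : ℝ) ^ 2 * (7 / 10) ^ u) / Fintype.card V *
        (regularGraphs V (2 * d)).card := by
  have hsub : ((regularGraphs V (2 * d)).filter fun G => ¬ EdgeExpansionAtLeast G (1 / 50)) ⊆
      (regularGraphs V (2 * d)).filter fun G => ∃ U : Finset V,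
        U.card ∈ Finset.range (Fintype.card V / 2 + 1) ∧
          ((G.interedges U Uᶜ).card : ℝ) < 1 / 50 * U.card := by
    refine Finset.monotone_filter_right _ fun G _ hG => ?_
    simp only [EdgeExpansionAtLeast, not_forall, not_le] at hG
    obtain ⟨U, hU, hlt⟩ := hG
    exact ⟨U, Finset.mem_range.2 (by omega), hlt⟩
  have hsummable : Summable fun u : ℕ => (u : ℝ) ^ 2 * (7 / 10) ^ u :=
    summable_pow_mul_geometric_of_norm_lt_one 2 (by norm_num)
  calc _ ≤ ∑ u ∈ Finset.range (Fintype.card V / 2 + 1),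
          900 * u ^ 2 / Fintype.card V * (7 / 10) ^ u * ((regularGraphs V (2 * d)).card : ℝ) :=
        (Nat.cast_le.2 (Finset.card_le_card hsub)).trans <|
          card_filter_exists_finset_le _ _ (fun u _ => by positivity) fun U hU =>
            choose_mul_card_filter_cut_lt_le hd hn (by have := Finset.mem_range.1 hU; omega)
    _ = 900 * (∑ u ∈ Finset.range (Fintype.card V / 2 + 1), (u : ℝ) ^ 2 * (7 / 10) ^ u) /
          Fintype.card V * (regularGraphs V (2 * d)).card := by
        rw [Finset.mul_sum, Finset.sum_div, Finset.sum_mul]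
        exact Finset.sum_congr rfl fun u _ => by ring
    _ ≤ _ := by
        gcongr
        exact hsummable.sum_le_tsum _ fun u _ => by positivity

end UnionBound

/-! ### Local sparsity of random regular graphs -/

section LocalSparsity

lemma mul_le_switchingRate_of_small {d s u n : ℝ} (hd : 2 ≤ d) (hs : 1 ≤ s) (hsu : s ≤ d * u)
    (hn : 6 * d ^ 3 * u ≤ n) :
    s * n ≤ s * (d * (n - u) - (d * u - s)) - 4 * d ^ 2 * (d * u - s) := by
  have hu : 0 < u := pos_of_mul_pos_right (show 0 < d * u by linarith) (by linarith)
  have hcorr : 4 * d ^ 2 * (d * u - s) ≤ s * (4 * d ^ 3 * u) :=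
    calc 4 * d ^ 2 * (d * u - s) ≤ 1 * (4 * d ^ 3 * u) := by nlinarith [sq_nonneg d]
      _ ≤ _ := by gcongr
  have hmain : n ≤ d * (n - u) - (d * u - s) - 4 * d ^ 3 * u := by
    have hcube : d * u ≤ d ^ 3 * u := by
      gcongr
      exact le_self_pow₀ (by linarith) (by norm_num)
    have hdn : 2 * n ≤ d * n := by
      gcongr
      exact (show 0 ≤ 6 * d ^ 3 * u by positivity).trans hn
    linarith
  nlinarith

lemma pow_self_le_three_pow_mul_factorial (u : ℕ) : (u : ℝ) ^ u ≤ 3 ^ u * u.factorial := by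
  have hexp := Real.pow_div_factorial_le_exp (u : ℝ) u.cast_nonneg u
  rw [div_le_iff₀ (by positivity)] at hexp
  refine hexp.trans ?_
  gcongr
  rw [← mul_one (u : ℝ), Real.exp_nat_mul]
  gcongr
  linarith [Real.exp_one_lt_d9]

lemma choose_mul_pow_div_factorial_le (d : ℝ) {n : ℕ} (hn : n ≠ 0) (u : ℕ) :
    n.choose u * (((d * u) ^ 2 / n) ^ (u + 1) / u.factorial) ≤
      (d * u) ^ 2 * (9 * d ^ 2) ^ u / n := by
  have : (0 : ℝ) < n := by positivity
  calc _ ≤ (n : ℝ) ^ u / u.factorial * (((d * u) ^ 2 / n) ^ (u + 1) / u.factorial) := by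
        gcongr
        exact Nat.choose_le_pow_div u n
    _ = (d * u) ^ 2 * (d ^ 2) ^ u / n * ((u : ℝ) ^ u / u.factorial) ^ 2 := by
        rw [pow_succ, div_pow, mul_pow d, mul_pow]
        field_simp
        ring
    _ ≤ (d * u) ^ 2 * (d ^ 2) ^ u / n * (3 ^ u) ^ 2 := by
        gcongr
        rw [div_le_iff₀ (by positivity)]
        exact pow_self_le_three_pow_mul_factorial u
    _ = _ := by
        rw [mul_pow 9, show (9 : ℝ) = 3 ^ 2 by norm_num, pow_right_comm (3 : ℝ) 2 u]
        ring

variable {V : Type*} [Fintype V] {d e : ℕ} {U : Finset V}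

lemma card_regularGraphsWithCut_mul_succ_le (hd : 2 ≤ d)
    (hU : 6 * d ^ 3 * U.card ≤ Fintype.card V) (he : e + 1 ≤ d * U.card) :
    (regularGraphsWithCut (2 * d) U (2 * (d * U.card - (e + 1)))).card *
        ((e + 1) * Fintype.card V : ℝ) ≤
      (regularGraphsWithCut (2 * d) U (2 * (d * U.card - e))).card * (d * U.card) ^ 2 := by
  have hswitch := card_regularGraphsWithCut_two_mul_mul_le d U (d * U.card - (e + 1))
  rw [show d * U.card - (e + 1) + 1 = d * U.card - e by omega] at hswitch
  push_cast [Nat.cast_sub he] at hswitch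
  rw [sub_sub_cancel] at hswitch
  have hd' : (2 : ℝ) ≤ d := by exact_mod_cast hd
  have he' : (e + 1 : ℝ) ≤ d * U.card := by exact_mod_cast he
  have hrate := mul_le_switchingRate_of_small (n := Fintype.card V) hd'
    (le_add_of_nonneg_left e.cast_nonneg) he' (by exact_mod_cast hU)
  refine (mul_le_mul_of_nonneg_left hrate (Nat.cast_nonneg _)).trans (hswitch.trans ?_)
  gcongr
  linarith [(e.cast_nonneg : (0 : ℝ) ≤ e)]

lemma card_regularGraphsWithCut_mul_factorial_le (hd : 2 ≤ d)
    (hU : 6 * d ^ 3 * U.card ≤ Fintype.card V) (he : e ≤ d * U.card) :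
    ((regularGraphsWithCut (2 * d) U (2 * (d * U.card - e))).card * e.factorial : ℝ) ≤
      ((d * U.card) ^ 2 / Fintype.card V) ^ e * (regularGraphs V (2 * d)).card := by
  have hgeom := le_geom (c := ((d * U.card) ^ 2 / Fintype.card V : ℝ)) (u := fun k =>
      ((regularGraphsWithCut (2 * d) U (2 * (d * U.card - k))).card * k.factorial : ℝ))
    (by positivity) e fun k hk => by
      have hUpos : 0 < U.card := Nat.pos_of_mul_pos_left (a := d) (by omega)
      have hn : 0 < Fintype.card V := hUpos.trans_le U.card_le_univ
      have hstep := card_regularGraphsWithCut_mul_succ_le hd hU (hk.trans_le he)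
      rw [div_mul_eq_mul_div, le_div_iff₀ (by exact_mod_cast hn), Nat.factorial_succ]
      push_cast
      nlinarith [(Nat.cast_pos (α := ℝ)).2 k.factorial_pos]
  refine hgeom.trans ?_
  gcongr
  simpa using Finset.card_le_card (regularGraphsWithCut_subset (2 * d) U _)

lemma choose_mul_card_regularGraphsWithCut_le_of_sparse (hd : 2 ≤ d)
    (hU : 6 * d ^ 3 * U.card ≤ Fintype.card V) (hU' : (d * U.card) ^ 2 ≤ Fintype.card V)
    (hUe : U.card < e) (he : e ≤ d * U.card) :
    ((Fintype.card V).choose U.card *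
        (regularGraphsWithCut (2 * d) U (2 * (d * U.card - e))).card : ℝ) ≤
      (d * U.card) ^ 2 * (9 * d ^ 2) ^ U.card / Fintype.card V *
        (regularGraphs V (2 * d)).card := by
  set R := ((regularGraphs V (2 * d)).card : ℝ)
  have hn : Fintype.card V ≠ 0 := by
    have : 0 < (d * U.card) ^ 2 := pow_pos (by omega) 2
    omega
  have hle_one : ((d * U.card) ^ 2 / Fintype.card V : ℝ) ≤ 1 :=
    div_le_one_of_le₀ (by exact_mod_cast hU') (Nat.cast_nonneg _)
  have hcount : ((regularGraphsWithCut (2 * d) U (2 * (d * U.card - e))).card : ℝ) ≤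
      ((d * U.card) ^ 2 / Fintype.card V) ^ (U.card + 1) / U.card.factorial * R := by
    rw [div_mul_eq_mul_div, le_div_iff₀ (by positivity)]
    calc _ ≤ ((regularGraphsWithCut (2 * d) U (2 * (d * U.card - e))).card * e.factorial : ℝ) := by
          gcongr
      _ ≤ ((d * U.card) ^ 2 / Fintype.card V) ^ e * R :=
          card_regularGraphsWithCut_mul_factorial_le hd hU he
      _ ≤ _ := by
          refine mul_le_mul_of_nonneg_right ?_ (Nat.cast_nonneg _)
          exact pow_le_pow_of_le_one (by positivity) hle_one hUe
  calc _ ≤ (Fintype.card V).choose U.card *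
          (((d * U.card) ^ 2 / Fintype.card V) ^ (U.card + 1) / U.card.factorial * R) := by gcongr
    _ = (Fintype.card V).choose U.card *
          (((d * U.card) ^ 2 / Fintype.card V) ^ (U.card + 1) / U.card.factorial) * R := by ring
    _ ≤ _ := mul_le_mul_of_nonneg_right (choose_mul_pow_div_factorial_le d hn _)
        (Nat.cast_nonneg _)

lemma choose_mul_card_filter_lt_card_interedges_le (hd : 2 ≤ d)
    (hU : 6 * d ^ 3 * U.card ≤ Fintype.card V) (hU' : (d * U.card) ^ 2 ≤ Fintype.card V) :
    (Fintype.card V).choose U.card * (((regularGraphs V (2 * d)).filter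
        fun G => 2 * U.card < (G.interedges U U).card).card : ℝ) ≤
      (d * U.card) ^ 3 * (9 * d ^ 2) ^ U.card / Fintype.card V *
        (regularGraphs V (2 * d)).card := by
  have hsub : ((regularGraphs V (2 * d)).filter
      fun G => 2 * U.card < (G.interedges U U).card) ⊆ (Finset.Ioc U.card (d * U.card)).biUnion
        fun e => regularGraphsWithCut (2 * d) U (2 * (d * U.card - e)) := by
    intro G hG
    obtain ⟨hreg, hlt⟩ := Finset.mem_filter.1 hG
    obtain ⟨e, he, hcard, hmem⟩ := exists_mem_regularGraphsWithCut (mem_regularGraphs.1 hreg) U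
    exact Finset.mem_biUnion.2 ⟨e, Finset.mem_Ioc.2 ⟨by omega, he⟩, hmem⟩
  have hcard : ((Finset.Ioc U.card (d * U.card)).card : ℝ) ≤ d * U.card := by
    rw [Nat.card_Ioc]
    exact_mod_cast Nat.sub_le _ _
  calc _ ≤ (Fintype.card V).choose U.card * ∑ e ∈ Finset.Ioc U.card (d * U.card),
          ((regularGraphsWithCut (2 * d) U (2 * (d * U.card - e))).card : ℝ) := by
        refine mul_le_mul_of_nonneg_left ?_ (Nat.cast_nonneg _)
        exact_mod_cast (Finset.card_le_card hsub).trans Finset.card_biUnion_le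
    _ ≤ ∑ _e ∈ Finset.Ioc U.card (d * U.card), (d * U.card) ^ 2 * (9 * d ^ 2) ^ U.card /
          Fintype.card V * ((regularGraphs V (2 * d)).card : ℝ) := by
        rw [Finset.mul_sum]
        refine Finset.sum_le_sum fun e he => ?_
        obtain ⟨hUe, he⟩ := Finset.mem_Ioc.1 he
        exact choose_mul_card_regularGraphsWithCut_le_of_sparse hd hU hU' hUe he
    _ = (Finset.Ioc U.card (d * U.card)).card * ((d * U.card) ^ 2 * (9 * d ^ 2) ^ U.card /
          Fintype.card V * ((regularGraphs V (2 * d)).card : ℝ)) := by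
        rw [Finset.sum_const, nsmul_eq_mul]
    _ ≤ d * U.card * ((d * U.card) ^ 2 * (9 * d ^ 2) ^ U.card /
          Fintype.card V * ((regularGraphs V (2 * d)).card : ℝ)) := by gcongr
    _ = _ := by ring

lemma sum_cube_mul_pow_le {x : ℝ} (hx : 1 ≤ x) (l : ℕ) :
    ∑ u ∈ Finset.range (l + 1), (u : ℝ) ^ 3 * x ^ u ≤ (16 * x) ^ l := by
  have hterm : ∀ u ∈ Finset.range (l + 1), (u : ℝ) ^ 3 * x ^ u ≤ (8 * x) ^ l := by
    intro u hu
    have hu2 : (u : ℝ) ≤ 2 ^ u := by exact_mod_cast Nat.lt_two_pow_self.le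
    calc (u : ℝ) ^ 3 * x ^ u ≤ (2 ^ u) ^ 3 * x ^ u := by gcongr
      _ = (8 * x) ^ u := by rw [pow_right_comm, ← mul_pow]; norm_num
      _ ≤ (8 * x) ^ l :=
          pow_le_pow_right₀ (by linarith) (Nat.lt_succ_iff.1 (Finset.mem_range.1 hu))
  have hl2 : (l + 1 : ℝ) ≤ 2 ^ l := by exact_mod_cast Nat.lt_two_pow_self
  calc _ ≤ (l + 1) * (8 * x) ^ l := by
        simpa using Finset.sum_le_card_nsmul _ _ _ hterm
    _ ≤ 2 ^ l * (8 * x) ^ l := by gcongr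
    _ = (16 * x) ^ l := by rw [← mul_pow]; ring

lemma card_filter_not_locallySparse_le {l : ℕ} (hd : 2 ≤ d) (hl : 6 * d ^ 3 * l ≤ Fintype.card V)
    (hl' : (d * l) ^ 2 ≤ Fintype.card V) :
    (((regularGraphs V (2 * d)).filter fun G => ¬ LocallySparse G l).card : ℝ) ≤
      d ^ 3 * (144 * d ^ 2) ^ l / Fintype.card V * (regularGraphs V (2 * d)).card := by
  have hsub : ((regularGraphs V (2 * d)).filter fun G => ¬ LocallySparse G l) ⊆
      (regularGraphs V (2 * d)).filter fun G => ∃ U : Finset V,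
        U.card ∈ Finset.range (l + 1) ∧ 2 * U.card < (G.interedges U U).card := by
    refine Finset.monotone_filter_right _ fun G _ hG => ?_
    simp only [LocallySparse, not_forall, not_le] at hG
    obtain ⟨U, hU, hlt⟩ := hG
    exact ⟨U, Finset.mem_range.2 (Nat.lt_succ_of_le hU), hlt⟩
  have hd2 : (1 : ℝ) ≤ 9 * d ^ 2 := by
    have : (2 : ℝ) ≤ d := by exact_mod_cast hd
    nlinarith
  calc _ ≤ ∑ u ∈ Finset.range (l + 1), (d * u : ℝ) ^ 3 * (9 * d ^ 2) ^ u / Fintype.card V *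
          (regularGraphs V (2 * d)).card := by
        refine (Nat.cast_le.2 (Finset.card_le_card hsub)).trans <|
          card_filter_exists_finset_le _ _ (fun u _ => ?_) fun U hU => ?_
        · positivity
        · have hUl : U.card ≤ l := Nat.lt_succ_iff.1 (Finset.mem_range.1 hU)
          exact choose_mul_card_filter_lt_card_interedges_le hd
            ((Nat.mul_le_mul_left _ hUl).trans hl)
            ((Nat.pow_le_pow_left (Nat.mul_le_mul_left d hUl) 2).trans hl')
    _ = (d : ℝ) ^ 3 * (∑ u ∈ Finset.range (l + 1), (u : ℝ) ^ 3 * (9 * d ^ 2) ^ u) /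
          Fintype.card V * (regularGraphs V (2 * d)).card := by
        rw [Finset.mul_sum, Finset.sum_div, Finset.sum_mul]
        exact Finset.sum_congr rfl fun u _ => by ring
    _ ≤ d ^ 3 * (16 * (9 * d ^ 2)) ^ l / Fintype.card V * (regularGraphs V (2 * d)).card := by
        gcongr
        exact sum_cube_mul_pow_le hd2 l
    _ = _ := by rw [show 16 * (9 * (d : ℝ) ^ 2) = 144 * d ^ 2 by ring]

end LocalSparsity

/-! ### Random regular graphs -/

section Circulant

lemma isRegularOfDegree_circulantGraph {Γ : Type*} [AddGroup Γ] {S : Finset Γ}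
    {_ : (SimpleGraph.circulantGraph (S : Set Γ)).LocallyFinite}
    (hneg : ∀ a ∈ S, -a ∈ S) (hzero : 0 ∉ S) :
    (SimpleGraph.circulantGraph (S : Set Γ)).IsRegularOfDegree S.card := by
  intro x
  have hnbr : (SimpleGraph.circulantGraph (S : Set Γ)).neighborFinset x =
      S.map (Equiv.addRight x).toEmbedding := by
    ext y
    rw [SimpleGraph.mem_neighborFinset, SimpleGraph.circulantGraph_adj, Finset.mem_map_equiv,
      Equiv.addRight_symm, Equiv.coe_addRight, Finset.mem_coe, Finset.mem_coe]
    simp only [← sub_eq_add_neg]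
    have hswap : x - y ∈ S → y - x ∈ S := fun h => neg_sub x y ▸ hneg _ h
    have hne : y - x ∈ S → x ≠ y := by
      rintro h rfl
      exact hzero (sub_self x ▸ h)
    tauto
  rw [SimpleGraph.degree, hnbr, Finset.card_map]

lemma regularGraphs_two_mul_nonempty {d n : ℕ} (hn : 2 * d < n) :
    (regularGraphs (Fin n) (2 * d)).Nonempty := by
  have : NeZero n := ⟨by omega⟩
  have hlt : ∀ a ∈ Finset.Icc 1 d ∪ Finset.Ico (n - d) n, a < n := by
    intro a ha
    simp only [Finset.mem_union, Finset.mem_Icc, Finset.mem_Ico] at ha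
    omega
  have hmem : ∀ a : Fin n, a ∈ Finset.attachFin _ hlt ↔
      (1 ≤ a.val ∧ a.val ≤ d) ∨ (n - d ≤ a.val ∧ a.val < n) := fun a => by
    rw [Finset.mem_attachFin, Finset.mem_union, Finset.mem_Icc, Finset.mem_Ico]
  have hzero : 0 ∉ Finset.attachFin _ hlt := by
    rw [hmem, Fin.val_zero]
    omega
  have hneg : ∀ a ∈ Finset.attachFin _ hlt, -a ∈ Finset.attachFin _ hlt := by
    intro a ha
    have hane : a ≠ 0 := ne_of_mem_of_not_mem ha hzero
    rw [hmem] at ha ⊢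
    rw [Fin.val_neg, if_neg hane]
    omega
  have hcard : (Finset.attachFin _ hlt).card = 2 * d := by
    rw [Finset.card_attachFin, Finset.card_union_of_disjoint, Nat.card_Icc, Nat.card_Ico]
    · omega
    · refine Finset.disjoint_left.2 fun a ha ha' => ?_
      have := Finset.mem_Icc.1 ha
      have := Finset.mem_Ico.1 ha'
      omega
  rw [← hcard]
  exact ⟨_, mem_regularGraphs.2 (isRegularOfDegree_circulantGraph hneg hzero)⟩

end Circulant

section Asymptotics

lemma mul_le_two_mul_pow (a l : ℕ) : a * l ≤ (2 * a) ^ l := by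
  rcases eq_or_ne l 0 with rfl | hl
  · simp
  · calc a * l ≤ a ^ l * 2 ^ l := Nat.mul_le_mul (Nat.le_self_pow hl a) Nat.lt_two_pow_self.le
      _ = (2 * a) ^ l := by rw [← mul_pow, mul_comm]

lemma exists_sparsity_scale {d n : ℕ} (hd : 2 ≤ d) (hn : n ≠ 0) :
    ∃ l, l < n ∧ n ≤ ((144 * d ^ 2) ^ 2) ^ (l + 1) ∧ 6 * d ^ 3 * l ≤ n ∧ (d * l) ^ 2 ≤ n ∧
      ((144 * d ^ 2) ^ l) ^ 2 ≤ n := by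
  have hbase : 1 < (144 * d ^ 2) ^ 2 := one_lt_pow₀ (by nlinarith) two_ne_zero
  have hlog := Nat.pow_log_le_self ((144 * d ^ 2) ^ 2) hn
  have hcube : 2 * (6 * d ^ 3) ≤ (144 * d ^ 2) ^ 2 := by
    have : d ^ 3 ≤ d ^ 4 := Nat.pow_le_pow_right (by omega) (by omega)
    linarith [show (144 * d ^ 2) ^ 2 = 20736 * d ^ 4 by ring]
  have hsq : (2 * d) ^ 2 ≤ (144 * d ^ 2) ^ 2 := Nat.pow_le_pow_left (by nlinarith) 2
  refine ⟨Nat.log ((144 * d ^ 2) ^ 2) n, Nat.log_lt_self _ hn,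
    (Nat.lt_pow_succ_log_self hbase n).le, ?_, ?_, ?_⟩
  · exact (mul_le_two_mul_pow _ _).trans ((Nat.pow_le_pow_left hcube _).trans hlog)
  · refine (Nat.pow_le_pow_left (mul_le_two_mul_pow d _) 2).trans ?_
    rw [pow_right_comm]
    exact (Nat.pow_le_pow_left hsq _).trans hlog
  · rwa [pow_right_comm]

/-- An upper bound, vanishing as `n → ∞`, for the probability that a random `2 * d`-regular graph
on `n` vertices has poor expansion or is not locally sparse. -/
noncomputable def failureBound (d n : ℕ) : ℝ :=
  900 * (∑' u : ℕ, (u : ℝ) ^ 2 * (7 / 10) ^ u) / n + d ^ 3 / √n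

lemma tendsto_failureBound (d : ℕ) :
    Filter.Tendsto (failureBound d) Filter.atTop (nhds 0) := by
  have hsqrt : Filter.Tendsto (fun n : ℕ => (d : ℝ) ^ 3 / √n) Filter.atTop (nhds 0) :=
    tendsto_const_nhds.div_atTop (Real.tendsto_sqrt_atTop.comp tendsto_natCast_atTop_atTop)
  exact add_zero (0 : ℝ) ▸ (tendsto_const_div_atTop_nhds_zero_nat _).add hsqrt

lemma exists_card_filter_not_good_le {d n : ℕ} (hd : 2 ≤ d) (hn : 4032 ≤ n) :
    ∃ l, l < n ∧ n ≤ ((144 * d ^ 2) ^ 2) ^ (l + 1) ∧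
      (((regularGraphs (Fin n) (2 * d)).filter fun G =>
        ¬ (EdgeExpansionAtLeast G (1 / 50) ∧ LocallySparse G l)).card : ℝ) ≤
          failureBound d n * (regularGraphs (Fin n) (2 * d)).card := by
  obtain ⟨l, hln, hnl, hcube, hsq, hpow⟩ := exists_sparsity_scale hd (n := n) (by omega)
  refine ⟨l, hln, hnl, ?_⟩
  have hexp := card_filter_not_edgeExpansionAtLeast_le (V := Fin n) hd (by rwa [Fintype.card_fin])
  have hsparse := card_filter_not_locallySparse_le (V := Fin n) (l := l) hd
    (by rwa [Fintype.card_fin]) (by rwa [Fintype.card_fin])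
  rw [Fintype.card_fin] at hexp hsparse
  have hsqrt : (d : ℝ) ^ 3 * (144 * d ^ 2) ^ l / n ≤ d ^ 3 / √n := by
    have hle : (144 * (d : ℝ) ^ 2) ^ l ≤ √n := Real.le_sqrt_of_sq_le (by exact_mod_cast hpow)
    calc (d : ℝ) ^ 3 * (144 * d ^ 2) ^ l / n ≤ d ^ 3 * √n / n := by gcongr
      _ = d ^ 3 / √n := by rw [mul_div_assoc, Real.sqrt_div_self, div_eq_mul_inv]
  simp only [not_and_or, Finset.filter_or]
  refine (Nat.cast_le.2 (Finset.card_union_le _ _)).trans ?_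
  rw [Nat.cast_add, failureBound, add_mul]
  exact add_le_add hexp (hsparse.trans (by gcongr))

lemma tendsto_card_filter_div_card {α : ℕ → Type*} {S : ∀ n, Finset (α n)}
    {P : ∀ n, α n → Prop} {ε : ℕ → ℝ} (hne : ∀ᶠ n in Filter.atTop, (S n).Nonempty)
    (hε : Filter.Tendsto ε Filter.atTop (nhds 0))
    (hle : ∀ᶠ n in Filter.atTop,
      (((S n).filter fun a => ¬ P n a).card : ℝ) ≤ ε n * (S n).card) :
    Filter.Tendsto (fun n => (((S n).filter (P n)).card : ℝ) / (S n).card)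
      Filter.atTop (nhds 1) := by
  refine tendsto_of_tendsto_of_tendsto_of_le_of_le' (by simpa using hε.const_sub 1)
    tendsto_const_nhds ?_ (.of_forall fun n => ?_)
  · filter_upwards [hne, hle] with n hne hle
    have hadd : (((S n).filter (P n)).card : ℝ) + ((S n).filter fun a => ¬ P n a).card =
        (S n).card := by
      exact_mod_cast Finset.card_filter_add_card_filter_not (P n)
    rw [le_div_iff₀ (Nat.cast_pos.2 hne.card_pos)]
    linarith
  · exact div_le_one_of_le₀ (Nat.cast_le.2 (Finset.card_filter_le _ _)) (Nat.cast_nonneg _)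

end Asymptotics

section Counting

variable (V : Type*) [Fintype V] (r : ℕ)

lemma ncard_setOf_regular_and (P : SimpleGraph V → Prop) :
    {G : SimpleGraph V | (∀ x, (G.neighborSet x).ncard = r) ∧ P G}.ncard =
      ((regularGraphs V r).filter P).card := by
  rw [← Set.ncard_coe_finset, Finset.coe_filter]
  simp only [ncard_neighborSet_eq_degree, mem_regularGraphs, SimpleGraph.IsRegularOfDegree]

lemma ncard_setOf_regular :
    {G : SimpleGraph V | ∀ x, (G.neighborSet x).ncard = r}.ncard = (regularGraphs V r).card := by
  simpa using ncard_setOf_regular_and V r fun _ => True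

end Counting

/-- Fix an even `r ≥ 4`. There is a constant `C` such that, for a graph `G`
drawn uniformly at random from all simple `r`-regular graphs on `{1,…,n}`, with probability
tending to `1` as `n → ∞`, for every rule `A` and every start vertex the E-process on `G`
has vertex cover time at most `C·n`. -/
theorem stmt1 (r : ℕ) (hr4 : 4 ≤ r) (hreven : Even r) :
    ∃ C : ℝ, 0 < C ∧
      Filter.Tendsto (fun n : ℕ =>
          (Set.ncard {G : SimpleGraph (Fin n) |
              (∀ x, (G.neighborSet x).ncard = r) ∧
              ∀ A : List (Fin n) → Fin n, ValidRule G A → ∀ u : Fin n,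
                ecoverTime G A u ≤ ENNReal.ofReal (C * (n : ℝ))} : ℝ) /
            (Set.ncard {G : SimpleGraph (Fin n) | ∀ x, (G.neighborSet x).ncard = r} : ℝ))
        Filter.atTop (nhds 1) := by
  obtain ⟨d, rfl⟩ := even_iff_exists_two_mul.1 hreven
  have hd : 2 ≤ d := by omega
  obtain ⟨C, hC, hcover⟩ := exists_ecoverTime_le (b := (144 * d ^ 2) ^ 2) (h := 1 / 50) hr4 hreven
    (Nat.one_le_pow _ _ (by positivity)) (by norm_num) (by norm_num)
  refine ⟨C, hC, ?_⟩
  simp only [ncard_setOf_regular_and, ncard_setOf_regular]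
  refine tendsto_card_filter_div_card ?_ (tendsto_failureBound d) ?_
  · filter_upwards [Filter.eventually_gt_atTop (2 * d)] with n hn
    exact regularGraphs_two_mul_nonempty hn
  · filter_upwards [Filter.eventually_ge_atTop 4032] with n hn
    obtain ⟨l, hln, hnl, hbad⟩ := exists_card_filter_not_good_le hd hn
    refine (Nat.cast_le.2 (Finset.card_le_card ?_)).trans hbad
    refine Finset.monotone_filter_right _ fun G hreg hslow ⟨hexp, hsparse⟩ => hslow ?_
    simpa only [Fintype.card_fin] using hcover (Fin n) G l (by rwa [Fintype.card_fin])
      (by rwa [Fintype.card_fin]) (mem_regularGraphs.1 hreg) hsparse hexp
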